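/- Let F = F_q, χ a multiplicative character of order d = q-1, χ_a = χ^a with 0 < a < q-1, χ_b = χ^b with 0 ≤ b < q-1. Let S, T be non-empty subsets of F and A : F → F with A(y) ≠ y for all y. Then for each natural number r ≥ 1, Σ_{y∈T} |Σ_{s∈S} χ_a(s+y)χ_b(s+A(y))| ≤ λ_r · q^{1/(4r)} · |S|^{1-1/(2r)} · |T|, where λ_r = ((4r-1)² + (2r)^{4r}·q·|T|^{-r})^{1/(4r)}. -/

import Mathlib

open Finset

/-!
Choosing phases `θ y` and applying Hölder's inequality in `s` reduces the double sum to the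
`2r`-th moment `∑ s, |∑ y ∈ T, θ y χ(s + y)^a χ(s + A y)^b| ^ (2r)`, whose expansion is a sum of
complete character sums indexed by `2r`-tuples in `T`. If some entry of a tuple differs from all
the other entries and from the images under `A` of all entries, then it contributes a linear factor
whose exponent is nontrivial for `χ`, and the Weil bound applies. In the remaining tuples every
entry is determined by another one; following this dependency, at most half of the entries determine
the tuple, so that there are few of them and the trivial bound suffices.

The Weil bound is proved by Stepanov's method. Over an extension with `q ^ (2 * n)` elements an
auxiliary polynomial vanishing to high order at every point where the character takes a prescribed
value shows that all values are taken about equally often, which gives the bound `O(q ^ n)`. These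
extension sums are the coefficients of the logarithmic derivative of an `L`-function which is a
polynomial of degree at most `#s - 1`, hence they are power sums of fixed complex numbers; their
growth forces each of these numbers to have absolute value at most `√q`.
-/

section Independence

open Polynomial

theorem irreducible_X_pow_sub_C_of_forall_dvd {L : Type*} [Field L] {d : ℕ} (hd : 0 < d) {c : L}
    (hc : ∀ (e : ℕ) (u : L), c ^ e = u ^ d → d ∣ e) : Irreducible (X ^ d - C c) := by
  obtain ⟨α, hα⟩ : ∃ α : AlgebraicClosure L, α ^ d = algebraMap L _ c :=
    IsAlgClosed.exists_pow_nat_eq _ hd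
  have hint : IsIntegral L α := Algebra.IsIntegral.isIntegral α
  have hgen : IntermediateField.AdjoinSimple.gen L α ^ d = algebraMap L _ c :=
    Subtype.ext (by simpa using hα)
  have hnorm := congrArg (Algebra.norm L) hgen
  rw [map_pow, Algebra.norm_algebraMap, IntermediateField.adjoin.finrank hint] at hnorm
  have hdvd_deg : d ∣ (minpoly L α).natDegree := hc _ _ hnorm.symm
  have hminpoly : minpoly L α = X ^ d - C c := by
    refine (eq_of_monic_of_dvd_of_natDegree_le (minpoly.monic hint)
      (monic_X_pow_sub_C c hd.ne') (minpoly.dvd L α (by simp [hα])) ?_).symm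
    rw [natDegree_X_pow_sub_C]
    exact Nat.le_of_dvd (minpoly.natDegree_pos hint) hdvd_deg
  exact hminpoly ▸ minpoly.irreducible hint

theorem natDegree_det_le_sum {R n : Type*} [CommRing R] [Fintype n] [DecidableEq n]
    (A : Matrix n n R[X]) (b : n → ℕ) (h : ∀ i j, (A i j).natDegree ≤ b j) :
    A.det.natDegree ≤ ∑ j, b j := by
  rw [Matrix.det_apply]
  refine natDegree_sum_le_of_forall_le _ _ fun σ _ => ?_
  exact (natDegree_smul_le _ _).trans <| (natDegree_prod_le _ _).trans <|
    Finset.sum_le_sum fun i _ => h _ _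

theorem natDegree_resultant_le {R : Type*} [CommRing R] (f g : R[X][X]) (m n : ℕ) {a b : ℕ}
    (hf : ∀ i, (f.coeff i).natDegree ≤ a) (hg : ∀ i, (g.coeff i).natDegree ≤ b) :
    (resultant f g m n).natDegree ≤ m * b + n * a := by
  have hentry : ∀ i j, (sylvester f g m n i j).natDegree ≤
      j.addCases (fun _ => b) (fun _ => a) := by
    intro i j
    induction j using Fin.addCases with
    | left j =>
      simp only [sylvester, Matrix.of_apply, Fin.addCases_left]
      split_ifs
      · exact hg _
      · simp
    | right j =>
      simp only [sylvester, Matrix.of_apply, Fin.addCases_right]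
      split_ifs
      · exact hf _
      · simp
  refine (natDegree_det_le_sum _ _ hentry).trans_eq ?_
  simp [Fin.sum_univ_add]

/-- The class of `h` in `K(X)ˣ` modulo constants and `d`-th powers has order `d`: the only powers
of `h` of the form `c * (q / p) ^ d` are the trivial ones. Denominators are cleared, so that only
polynomials occur. -/
def HasOrderModPow {K : Type*} [Field K] (h : K[X]) (d : ℕ) : Prop :=
  ∀ (e : ℕ) (c : K) (p q : K[X]), c ≠ 0 → p ≠ 0 → C c * q ^ d = p ^ d * h ^ e → d ∣ e

variable {K : Type*} [Field K] {h : K[X]} {d : ℕ} {c : K}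

theorem HasOrderModPow.irreducible_X_pow_sub_C (hh : HasOrderModPow h d) (hd : 0 < d) (h0 : h ≠ 0)
    (hc : c ≠ 0) :
    Irreducible
      (X ^ d - C (algebraMap K[X] (RatFunc K) (C c) / algebraMap K[X] (RatFunc K) h)) := by
  set φ := algebraMap K[X] (RatFunc K)
  have hinj : Function.Injective φ := RatFunc.algebraMap_injective K
  have hφ {p : K[X]} (hp : p ≠ 0) : φ p ≠ 0 := (map_ne_zero_iff φ hinj).2 hp
  have hφc : φ (C c) ≠ 0 := hφ (C_ne_zero.2 hc)
  refine irreducible_X_pow_sub_C_of_forall_dvd hd fun e u hu => ?_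
  have hu0 : u ≠ 0 := by
    rintro rfl
    rw [zero_pow hd.ne'] at hu
    exact pow_ne_zero e (div_ne_zero hφc (hφ h0)) hu
  refine hh e (c ^ e) u.num u.denom (pow_ne_zero _ hc) (RatFunc.num_ne_zero hu0) (hinj ?_)
  rw [← RatFunc.num_div_denom u, div_pow, div_pow,
    div_eq_div_iff (pow_ne_zero _ (hφ h0)) (pow_ne_zero _ (hφ u.denom_ne_zero))] at hu
  simpa only [map_mul, map_pow] using hu

theorem HasOrderModPow.resultant_ne_zero (hh : HasOrderModPow h d) (h0 : h ≠ 0) (hc : c ≠ 0)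
    {P : K[X][X]} (hP : P ≠ 0) (hPd : P.natDegree < d) :
    resultant P (C h * X ^ d - C (C c)) P.natDegree d ≠ 0 := by
  set G : K[X][X] := C h * X ^ d - C (C c)
  set φ := algebraMap K[X] (RatFunc K)
  have hinj : Function.Injective φ := RatFunc.algebraMap_injective K
  have hφh : φ h ≠ 0 := (map_ne_zero_iff φ hinj).2 h0
  have hGd : G.natDegree = d := by
    rw [natDegree_sub_C, natDegree_C_mul h0, natDegree_X_pow]
  have hG : G.map φ = C (φ h) * (X ^ d - C (φ (C c) / φ h)) := by
    rw [mul_sub, ← C_mul, mul_div_cancel₀ _ hφh]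
    simp [G, φ]
  have hcop : IsCoprime (P.map φ) (G.map φ) := by
    rw [hG, isCoprime_mul_unit_left_right (isUnit_C.2 hφh.isUnit), isCoprime_comm,
      (hh.irreducible_X_pow_sub_C (by lia) h0 hc).coprime_iff_not_dvd]
    intro hdvd
    have hle := natDegree_le_of_dvd hdvd ((Polynomial.map_ne_zero_iff hinj).2 hP)
    rw [natDegree_X_pow_sub_C, natDegree_map_eq_of_injective hinj] at hle
    lia
  intro hres
  have hres' : resultant (P.map φ) (G.map φ) = 0 := by
    rw [natDegree_map_eq_of_injective hinj, natDegree_map_eq_of_injective hinj, hGd,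
      resultant_map_map, hres, map_zero]
  exact (resultant_eq_zero_iff.1 hres').2 hcop

/- Modulo `X ^ Q` the element `w` is a `d`-th root of `c / h`, so `X ^ Q` divides the resultant of
`P` with `h * Y ^ d - c`; the degree of that resultant is too small unless it vanishes. -/
theorem HasOrderModPow.eq_zero_of_X_pow_dvd_eval (hh : HasOrderModPow h d) (h0 : h ≠ 0)
    (hc : c ≠ 0) {Q H : ℕ} (hQ : d * (H + h.natDegree) < Q) {P : K[X][X]} (hPd : P.natDegree < d)
    (hPH : ∀ j, (P.coeff j).natDegree ≤ H) {w : K[X]} (hw : X ^ Q ∣ h * w ^ d - C c)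
    (hP : X ^ Q ∣ P.eval w) : P = 0 := by
  by_contra hP0
  set G : K[X][X] := C h * X ^ d - C (C c) with hG
  have hGd : G.natDegree = d := by
    rw [natDegree_sub_C, natDegree_C_mul h0, natDegree_X_pow]
  have hGcoeff : ∀ i, (G.coeff i).natDegree ≤ h.natDegree := by
    intro i
    simp only [hG, coeff_sub, coeff_C_mul, coeff_X_pow, coeff_C]
    refine (natDegree_sub_le _ _).trans (max_le ?_ ?_) <;> split_ifs <;> simp
  have hdvd : X ^ Q ∣ resultant P G P.natDegree d := by
    obtain ⟨p, q, -, -, hpq⟩ := exists_mul_add_mul_eq_C_resultant (m := P.natDegree) (n := d) P G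
      le_rfl hGd.le (Or.inr (by lia))
    rw [← eval_C (x := w) (a := resultant P G P.natDegree d), ← hpq, eval_add, eval_mul, eval_mul]
    exact dvd_add (hP.mul_right _) (Dvd.dvd.mul_right (by simpa [hG] using hw) _)
  have hQ_le := natDegree_le_of_dvd hdvd (hh.resultant_ne_zero h0 hc hP0 hPd)
  rw [natDegree_X_pow] at hQ_le
  have hres_le := natDegree_resultant_le P G P.natDegree d hPH hGcoeff
  have : P.natDegree * h.natDegree ≤ d * h.natDegree := Nat.mul_le_mul_right _ hPd.le
  lia

theorem eq_zero_of_sum_X_pow_mul_eq_zero {R : Type*} [CommRing R] {B Q : ℕ} {g : Fin B → R[X]}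
    (hg : ∀ k, X ^ Q ∣ g k → g k = 0) (hsum : ∑ k : Fin B, X ^ (k * Q : ℕ) * g k = 0)
    (k : Fin B) : g k = 0 := by
  induction k using WellFoundedLT.induction with
  | ind k ih =>
    refine hg k ?_
    have hdvd : X ^ ((k + 1) * Q : ℕ) ∣ X ^ (k * Q : ℕ) * g k := by
      rw [← Finset.add_sum_erase _ _ (Finset.mem_univ k)] at hsum
      rw [eq_neg_of_add_eq_zero_left hsum, dvd_neg]
      refine Finset.dvd_sum fun j hj => ?_
      rcases lt_or_gt_of_ne (Finset.mem_erase.1 hj).1 with hlt | hgt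
      · simp [ih j hlt]
      · exact Dvd.dvd.mul_right (pow_dvd_pow _ (Nat.mul_le_mul_right _ hgt)) _
    rw [add_mul, one_mul, pow_add] at hdvd
    exact (isRegular_X_pow _).left.dvd_cancel_left.1 hdvd

end Independence

section Stepanov

open Polynomial

theorem pow_sub_dvd_hasseDeriv_pow_mul {R : Type*} [CommSemiring R] (h : R[X]) (N : ℕ) :
    ∀ (l : ℕ) (g : R[X]), h ^ (N - l) ∣ hasseDeriv l (h ^ N * g) := by
  induction N with
  | zero => simp
  | succ N ih =>
    intro l g
    rw [pow_succ', mul_assoc, hasseDeriv_mul]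
    refine Finset.dvd_sum fun ⟨a, b⟩ hab => ?_
    rw [HasAntidiagonal.mem_antidiagonal] at hab
    rcases Nat.eq_zero_or_pos a with rfl | ha
    · obtain rfl : b = l := by lia
      rw [hasseDeriv_zero']
      refine dvd_trans ?_ (mul_dvd_mul_left h (ih b g))
      rw [← pow_succ']
      exact pow_dvd_pow h (by lia)
    · exact Dvd.dvd.mul_left ((pow_dvd_pow h (by lia)).trans (ih b g)) _

theorem exists_hasseDeriv_pow_mul_X_pow_eq {R : Type*} [CommRing R] [IsDomain R] {h : R[X]}
    (h0 : h ≠ 0) {N l : ℕ} (hl : l ≤ N) (i : ℕ) :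
    ∃ D : R[X], hasseDeriv l (h ^ N * X ^ i) = h ^ (N - l) * D ∧
      D.natDegree ≤ l * h.natDegree + i := by
  obtain ⟨D, hD⟩ := pow_sub_dvd_hasseDeriv_pow_mul h N l (X ^ i)
  refine ⟨D, hD, ?_⟩
  by_cases hD0 : D = 0
  · simp [hD0]
  have hdeg := natDegree_hasseDeriv_le (h ^ N * X ^ i) l
  rw [hD, natDegree_mul (pow_ne_zero _ h0) hD0, natDegree_mul (pow_ne_zero _ h0) (by simp),
    natDegree_pow, natDegree_pow, natDegree_X_pow] at hdeg
  have hsplit : N * h.natDegree = (N - l) * h.natDegree + l * h.natDegree := by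
    rw [← add_mul, Nat.sub_add_cancel hl]
  lia

theorem X_sub_C_pow_dvd_of_eval_hasseDeriv_eq_zero {R : Type*} [CommRing R] {p : R[X]} {x : R}
    {n : ℕ} (hp : ∀ l < n, (hasseDeriv l p).eval x = 0) : (X - C x) ^ n ∣ p := by
  rw [X_sub_C_pow_dvd_iff, ← taylor_apply, X_pow_dvd_iff]
  simpa only [taylor_coeff] using hp

theorem exists_ne_zero_forall_sum_C_mul_eq_zero {K ι κ : Type*} [Field K] [Fintype ι] [Fintype κ]
    {E : ℕ} {G : κ → ι → K[X]} (hG : ∀ l i, (G l i).natDegree < E)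
    (hcard : Fintype.card κ * E < Fintype.card ι) :
    ∃ c : ι → K, c ≠ 0 ∧ ∀ l, ∑ i, C (c i) * G l i = 0 := by
  let coeffs : Matrix (κ × Fin E) ι K := Matrix.of fun le i => (G le.1 i).coeff le.2
  have hfinrank : Module.finrank K (κ × Fin E → K) < Module.finrank K (ι → K) := by
    simpa using hcard
  obtain ⟨c, hker, hc⟩ := (Submodule.ne_bot_iff _).1
    (LinearMap.ker_ne_bot_of_finrank_lt (f := coeffs.mulVecLin) hfinrank)
  refine ⟨c, hc, fun l => Polynomial.ext fun e => ?_⟩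
  simp only [finsetSum_coeff, coeff_C_mul, coeff_zero]
  by_cases he : e < E
  · simpa [coeffs, Matrix.mulVec, dotProduct, mul_comm] using congrFun hker (l, ⟨e, he⟩)
  · refine Finset.sum_eq_zero fun i _ => ?_
    rw [coeff_eq_zero_of_natDegree_lt ((hG l i).trans_le (not_lt.1 he)), mul_zero]

theorem card_mul_le_natDegree {K : Type*} [Field K] {p : K[X]} (hp : p ≠ 0) {s : Finset K} {n : ℕ}
    (hs : ∀ x ∈ s, (X - C x) ^ n ∣ p) : #s * n ≤ p.natDegree := by
  have hdvd : ∏ x ∈ s, (X - C x) ^ n ∣ p := by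
    refine Finset.prod_dvd_of_coprime (fun x _ y _ hxy => ?_) hs
    exact (isCoprime_X_sub_C_of_isUnit_sub (sub_ne_zero.2 hxy).isUnit).pow
  refine le_trans (Eq.le ?_) (natDegree_le_of_dvd hdvd hp)
  rw [natDegree_prod_of_monic _ _ fun x _ => (monic_X_sub_C x).pow n]
  simp

/-- The auxiliary polynomial of Stepanov's method,
`h ^ ℓ * ∑ c (j, k, i) * X ^ i * h ^ (j * M) * X ^ (k * Q)`. -/
noncomputable def stepanovPoly {K : Type*} [Field K] (h : K[X]) (M Q ℓ : ℕ) {d B H : ℕ}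
    (c : Fin d × Fin B × Fin H → K) : K[X] :=
  ∑ x, C (c x) * (h ^ (ℓ + x.1 * M) * X ^ (x.2.2 : ℕ) * X ^ (x.2.1 * Q : ℕ))

open Classical in
/-- The coefficient of `X ^ (k * Q)` in `stepanovPoly`, as a polynomial in `h ^ M` over `K[X]`. -/
noncomputable def stepanovDigit {K : Type*} [Field K] {d B H : ℕ} (c : Fin d × Fin B × Fin H → K)
    (k : Fin B) : K[X][X] :=
  ofFn d fun j => ofFn H fun i => c (j, k, i)

section

variable {K : Type*} [Field K] {d B H : ℕ} (c : Fin d × Fin B × Fin H → K)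

theorem stepanovDigit_natDegree_lt (hd : 0 < d) (k : Fin B) :
    (stepanovDigit c k).natDegree < d := by
  classical exact ofFn_natDegree_lt hd _

theorem stepanovDigit_coeff_natDegree_le (k : Fin B) (j : ℕ) :
    ((stepanovDigit c k).coeff j).natDegree ≤ H := by
  classical
  rw [stepanovDigit]
  by_cases hj : j < d
  · rw [ofFn_coeff_eq_val_of_lt _ hj]
    rcases Nat.eq_zero_or_pos H with rfl | hH
    · simp [ofFn_zero']
    · exact (ofFn_natDegree_lt hH _).le
  · rw [ofFn_coeff_eq_zero_of_ge _ (not_lt.1 hj), natDegree_zero]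
    exact H.zero_le

variable {c} in
theorem eq_zero_of_stepanovDigit_eq_zero (hc : ∀ k, stepanovDigit c k = 0) : c = 0 := by
  classical
  funext ⟨j, k, i⟩
  have hrow := congrFun ((injective_ofFn d) ((hc k).trans (map_zero _).symm)) j
  exact congrFun ((injective_ofFn H) (hrow.trans (map_zero _).symm)) i

theorem stepanovPoly_eq_pow_mul_sum (h : K[X]) (M Q ℓ : ℕ) :
    stepanovPoly h M Q ℓ c =
      h ^ ℓ * ∑ k : Fin B, X ^ (k * Q : ℕ) * (stepanovDigit c k).eval (h ^ M) := by
  simp only [stepanovPoly, stepanovDigit, Fintype.sum_prod_type, ofFn_eq_sum_monomial,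
    ← C_mul_X_pow_eq_monomial, eval_finsetSum, eval_mul, eval_C, eval_pow, eval_X, Finset.mul_sum,
    Finset.sum_mul]
  rw [Finset.sum_comm]
  refine Finset.sum_congr rfl fun k _ => Finset.sum_congr rfl fun j _ =>
    Finset.sum_congr rfl fun i _ => ?_
  rw [pow_add, mul_comm (j : ℕ) M, pow_mul]
  ring

theorem natDegree_stepanovPoly_le (h : K[X]) (M Q ℓ : ℕ) :
    (stepanovPoly h M Q ℓ c).natDegree ≤ (ℓ + d * M) * h.natDegree + H + (B - 1) * Q := by
  refine natDegree_sum_le_of_forall_le _ _ fun x _ => (natDegree_C_mul_le _ _).trans ?_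
  refine natDegree_mul_le_of_le (natDegree_mul_le_of_le ?_
    ((natDegree_X_pow _).trans_le x.2.2.2.le)) ((natDegree_X_pow _).trans_le ?_)
  · refine natDegree_pow_le.trans (Nat.mul_le_mul_right _ (Nat.add_le_add_left ?_ ℓ))
    exact Nat.mul_le_mul_right M x.1.2.le
  · exact Nat.mul_le_mul_right Q (Nat.le_sub_one_of_lt x.2.1.2)

end

section

variable {K : Type*} [Field K] [Fintype K] {h : K[X]} {d : ℕ}

theorem X_pow_card_dvd_pow_card_sub_C (h : K[X]) :
    X ^ Fintype.card K ∣ h ^ Fintype.card K - C (h.eval 0) := by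
  have hdvd : X ∣ h - C (h.eval 0) := X_dvd_iff.2 (by simp [coeff_zero_eq_eval_zero])
  have hexpand := map_dvd (expand K (Fintype.card K)) hdvd
  rwa [map_sub, expand_X, expand_C, FiniteField.expand_card] at hexpand

theorem eval_hasseDeriv_mul_X_pow_card (g : K[X]) (k : ℕ) {l : ℕ} (hl : l < Fintype.card K)
    (x : K) :
    (hasseDeriv l (g * X ^ (k * Fintype.card K))).eval x = (hasseDeriv l g).eval x * x ^ k := by
  have hdvd : X ^ Fintype.card K ∣ taylor x (X ^ (k * Fintype.card K) : K[X]) - C (x ^ k) := by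
    rw [taylor_X_pow, pow_mul]
    have hcard := X_pow_card_dvd_pow_card_sub_C ((X + C x) ^ k)
    rwa [eval_pow, eval_add, eval_X, eval_C, zero_add] at hcard
  rw [← taylor_coeff, ← taylor_coeff, taylor_mul, ← coeff_mul_C, ← sub_eq_zero, ← coeff_sub,
    ← mul_sub]
  exact X_pow_dvd_iff.1 (hdvd.mul_left _) l hl

theorem HasOrderModPow.stepanovPoly_ne_zero (hh : HasOrderModPow h d) (h0 : h.eval 0 ≠ 0)
    {M ℓ B H : ℕ} (hM : d * M + 1 = Fintype.card K) (hH : H + h.natDegree ≤ M)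
    {c : Fin d × Fin B × Fin H → K} (hc : c ≠ 0) :
    stepanovPoly h M (Fintype.card K) ℓ c ≠ 0 := by
  have hh0 : h ≠ 0 := by rintro rfl; simp at h0
  have hd : 0 < d := by
    rcases Function.ne_iff.1 hc with ⟨x, -⟩
    exact x.1.pos
  have hroot : X ^ Fintype.card K ∣ h * (h ^ M) ^ d - C (h.eval 0) := by
    rw [← pow_mul, ← pow_succ', mul_comm, hM]
    exact X_pow_card_dvd_pow_card_sub_C h
  have hQ : d * (H + h.natDegree) < Fintype.card K := by
    have := Nat.mul_le_mul_left d hH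
    lia
  have hdigit (k : Fin B) (hk : X ^ Fintype.card K ∣ (stepanovDigit c k).eval (h ^ M)) :
      stepanovDigit c k = 0 :=
    hh.eq_zero_of_X_pow_dvd_eval hh0 h0 hQ (stepanovDigit_natDegree_lt c hd k)
      (stepanovDigit_coeff_natDegree_le c k) hroot hk
  intro hzero
  rw [stepanovPoly_eq_pow_mul_sum, mul_eq_zero, or_iff_right (pow_ne_zero _ hh0)] at hzero
  have heval := eq_zero_of_sum_X_pow_mul_eq_zero (fun k hk => by rw [hdigit k hk, eval_zero]) hzero
  exact hc (eq_zero_of_stepanovDigit_eq_zero fun k => hdigit k (by rw [heval k]; exact dvd_zero _))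

theorem exists_stepanovPoly_vanishing (h0 : h ≠ 0) {M ℓ B H : ℕ} (hℓ : ℓ ≤ Fintype.card K)
    (hcount : ℓ * (ℓ * h.natDegree + H + B) < d * (B * H)) (ζ : K) :
    ∃ c : Fin d × Fin B × Fin H → K, c ≠ 0 ∧
      ∀ x, h.eval x ^ M = ζ → (X - C x) ^ ℓ ∣ stepanovPoly h M (Fintype.card K) ℓ c := by
  have hquot (l : Fin ℓ) (x : Fin d × Fin B × Fin H) :=
    exists_hasseDeriv_pow_mul_X_pow_eq h0 (l.2.le.trans (Nat.le_add_right ℓ (x.1 * M))) x.2.2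
  choose D hD hDdeg using hquot
  let G (l : Fin ℓ) (x : Fin d × Fin B × Fin H) : K[X] :=
    C (ζ ^ (x.1 : ℕ)) * D l x * X ^ (x.2.1 : ℕ)
  have hG (l x) : (G l x).natDegree < ℓ * h.natDegree + H + B := by
    have hle : (G l x).natDegree ≤ l * h.natDegree + x.2.2 + x.2.1 :=
      natDegree_mul_le_of_le ((natDegree_C_mul_le _ _).trans (hDdeg l x)) (natDegree_X_pow_le _)
    have := Nat.mul_le_mul_right h.natDegree l.2.le
    lia
  obtain ⟨c, hc, hsum⟩ := exists_ne_zero_forall_sum_C_mul_eq_zero hG (by simpa using hcount)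
  refine ⟨c, hc, fun x hx => X_sub_C_pow_dvd_of_eval_hasseDeriv_eq_zero fun l hl => ?_⟩
  have hterm (y : Fin d × Fin B × Fin H) :
      (hasseDeriv l (h ^ (ℓ + y.1 * M) * X ^ (y.2.2 : ℕ) *
        X ^ (y.2.1 * Fintype.card K : ℕ))).eval x = h.eval x ^ (ℓ - l) * (G ⟨l, hl⟩ y).eval x := by
    rw [eval_hasseDeriv_mul_X_pow_card _ _ (hl.trans_le hℓ), hD ⟨l, hl⟩ y,
      show ℓ + y.1 * M - l = ℓ - l + M * y.1 by rw [mul_comm M]; omega]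
    simp only [G, eval_mul, eval_pow, eval_C, eval_X, pow_add, pow_mul, hx]
    ring
  simp only [stepanovPoly, map_sum, eval_finsetSum, ← smul_eq_C_mul, map_smul, eval_smul, hterm,
    smul_eq_mul]
  simpa [eval_finsetSum, mul_left_comm, Finset.mul_sum] using
    congrArg (fun p => h.eval x ^ (ℓ - l) * p.eval x) (hsum ⟨l, hl⟩)

theorem HasOrderModPow.card_eval_pow_eq_mul_le [DecidableEq K] (hh : HasOrderModPow h d)
    (h0 : h.eval 0 ≠ 0) {t M : ℕ} (hd : 0 < d) (hcard : Fintype.card K = (d * t + 1) ^ 2)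
    (hM : M = d * t ^ 2 + 2 * t) (ht : h.natDegree < t) (ζ : K) :
    #{x : K | h.eval x ^ M = ζ} * (d * t) ≤
      h.natDegree * (d * t) + Fintype.card K * (t + 2 * h.natDegree + 2) := by
  have hh0 : h ≠ 0 := by rintro rfl; simp at h0
  set δ := h.natDegree with hδ
  have hdM : d * M + 1 = Fintype.card K := by rw [hcard, hM]; ring
  have htM : t ≤ M := by rw [hM]; nlinarith
  obtain ⟨H, rfl⟩ : ∃ H, M = H + δ := ⟨M - δ, by lia⟩
  have hℓ : d * t ≤ Fintype.card K := by rw [hcard]; nlinarith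
  have hcount : d * t * (d * t * δ + H + (t + δ + 1)) < d * ((t + δ + 1) * H) := by
    have hH : (H : ℤ) = d * t ^ 2 + 2 * t - δ := by zify at hM; linarith
    zify at hd ht ⊢
    rw [hH]
    have hdt : (0 : ℤ) ≤ (d - 1) * (d * t ^ 2) := mul_nonneg (by linarith) (by positivity)
    have hδt : (0 : ℤ) < (δ + 1) * (d * (t - δ)) :=
      mul_pos (by positivity) (mul_pos hd (by linarith))
    nlinarith
  obtain ⟨c, hc, hvanish⟩ := exists_stepanovPoly_vanishing hh0 hℓ hcount ζ
  have hdeg := natDegree_stepanovPoly_le c h (H + δ) (Fintype.card K) (d * t)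
  have hzeros := card_mul_le_natDegree (hh.stepanovPoly_ne_zero h0 hdM le_rfl hc)
    (s := {x : K | h.eval x ^ (H + δ) = ζ}) (n := d * t)
    (fun x hx => hvanish x (by simpa using hx))
  refine hzeros.trans (hdeg.trans ?_)
  have hH : H ≤ Fintype.card K := by nlinarith
  rw [← hδ, Nat.add_sub_cancel]
  nlinarith

end

end Stepanov

section ExtensionBound

open Polynomial

theorem count_roots_prod_X_add_C_pow {K ι : Type*} [Field K] [DecidableEq K] {s : Finset ι}
    {v : ι → K} (hv : Set.InjOn v s) (e : ι → ℕ) {c : ι} (hc : c ∈ s) :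
    (∏ c ∈ s, (X + C (v c)) ^ e c).roots.count (-v c) = e c := by
  have hne : ∏ c ∈ s, (X + C (v c)) ^ e c ≠ 0 :=
    (monic_prod_of_monic _ _ fun c _ => (monic_X_add_C (v c)).pow (e c)).ne_zero
  rw [roots_prod _ _ hne, Multiset.count_bind]
  change ∑ b ∈ s, Multiset.count (-v c) ((X + C (v b)) ^ e b).roots = e c
  rw [Finset.sum_eq_single_of_mem c hc]
  · simp
  · intro b hb hbc
    have hne : v c ≠ v b := fun h => hbc (hv hb hc h.symm)
    simp [hne]

theorem hasOrderModPow_prod_X_add_C_pow {K ι : Type*} [Field K] {s : Finset ι} {v : ι → K}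
    (hv : Set.InjOn v s) {e : ι → ℕ} {d : ℕ} (hcop : d.Coprime (s.gcd e)) :
    HasOrderModPow (∏ c ∈ s, (X + C (v c)) ^ e c) d := by
  classical
  intro k l p q hl hp heq
  have hmonic : (∏ c ∈ s, (X + C (v c)) ^ e c).Monic :=
    monic_prod_of_monic _ _ fun c _ => (monic_X_add_C (v c)).pow (e c)
  have hdvd : ∀ c ∈ s, d ∣ k * e c := by
    intro c hc
    have hcount := congrArg (fun f => f.roots.count (-v c)) heq
    simp only [roots_C_mul _ hl,
      roots_mul (mul_ne_zero (pow_ne_zero d hp) (pow_ne_zero k hmonic.ne_zero)), roots_pow,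
      Multiset.count_add, Multiset.count_nsmul, count_roots_prod_X_add_C_pow hv e hc] at hcount
    exact (Nat.dvd_add_right (dvd_mul_right _ _)).1 (hcount ▸ dvd_mul_right d _)
  have hdvd_gcd : d ∣ s.gcd fun c => k * e c := Finset.dvd_gcd hdvd
  rw [Finset.gcd_mul_left, normalize_eq] at hdvd_gcd
  exact hcop.dvd_of_dvd_mul_right hdvd_gcd

theorem sum_mulChar_pow_eq_one_eq_zero {F R : Type*} [Field F] [Fintype F] [DecidableEq F]
    [CommRing R] [IsDomain R] {χ : MulChar F R} {d g : ℕ} (hdg : g * d = Fintype.card F - 1)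
    (hχ : χ ^ g ≠ 1) : ∑ u : F with u ^ d = 1, χ u = 0 := by
  obtain ⟨v, hv⟩ := MulChar.ne_one_iff.1 hχ
  rw [MulChar.pow_apply_coe, ← map_pow] at hv
  have hvd : ((v : F) ^ g) ^ d = 1 := by
    rw [← pow_mul, hdg, FiniteField.pow_card_sub_one_eq_one _ v.ne_zero]
  have htranslate : χ (v ^ g) * ∑ u : F with u ^ d = 1, χ u = ∑ u : F with u ^ d = 1, χ u := by
    rw [Finset.mul_sum]
    refine Finset.sum_equiv (Equiv.mulLeft₀ ((v : F) ^ g) (pow_ne_zero g v.ne_zero)) ?_ ?_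
    · simp [mul_pow, hvd]
    · simp
  have hzero : (χ (v ^ g) - 1) * ∑ u : F with u ^ d = 1, χ u = 0 := by
    rw [sub_mul, htranslate, one_mul, sub_self]
  exact (mul_eq_zero.1 hzero).resolve_left (sub_ne_zero.2 hv)

theorem norm_mulChar_le_one {F : Type*} [Field F] [Finite F] (χ : MulChar F ℂ) (x : F) :
    ‖χ x‖ ≤ 1 := by
  have := Fintype.ofFinite F
  rcases eq_or_ne x 0 with rfl | hx
  · simp [MulChar.map_zero]
  · have hpow : χ x ^ (Fintype.card F - 1) = 1 := by
      rw [← map_pow, FiniteField.pow_card_sub_one_eq_one _ hx, map_one]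
    exact (Complex.norm_eq_one_of_pow_eq_one hpow
      (Nat.sub_ne_zero_of_lt Fintype.one_lt_card)).le

theorem abs_sub_div_le_of_forall_le {ι : Type*} {U : Finset ι} {n : ι → ℝ} {d : ℕ}
    (hd : 0 < d) (hU : #U ≤ d) {Q E B : ℝ} (hQ : 0 ≤ Q) (hE : 0 ≤ E) (hB : 0 ≤ B)
    (hn : ∀ u ∈ U, n u ≤ Q / d + E) (hsum : Q - B ≤ ∑ u ∈ U, n u) {u : ι} (hu : u ∈ U) :
    |n u - Q / d| ≤ B + d * E := by
  classical
  have hd' : (1 : ℝ) ≤ d := by exact_mod_cast hd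
  have hEd : E ≤ d * E := le_mul_of_one_le_left hE hd'
  rw [abs_sub_le_iff]
  constructor
  · linarith [hn u hu]
  · have hothers : ∑ x ∈ U.erase u, n x ≤ #(U.erase u) • (Q / d + E) :=
      Finset.sum_le_card_nsmul _ _ _ fun x hx => hn x (Finset.mem_of_mem_erase hx)
    have hcard : (#(U.erase u) : ℝ) ≤ d - 1 := by
      have hlt : #(U.erase u) + 1 ≤ d := (Finset.card_erase_add_one hu).trans_le hU
      have hlt' : (#(U.erase u) : ℝ) + 1 ≤ d := by exact_mod_cast hlt
      linarith
    have hmean : (#(U.erase u) : ℝ) * (Q / d + E) ≤ (d - 1) * (Q / d + E) := by gcongr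
    have hexpand : (d - 1) * (Q / d + E) = Q - Q / d + d * E - E := by field_simp; ring
    rw [nsmul_eq_mul] at hothers
    rw [← Finset.add_sum_erase _ _ hu] at hsum
    linarith

/- An upper bound close to the mean for every fibre forces a lower bound as well, since the fibres
over `U` exhaust all but `k` points. -/
theorem norm_sum_comp_le_of_card_fiber_le {ι κ : Type*} [DecidableEq ι] [Fintype κ] {N : κ → ι}
    {U : Finset ι} {z : ι → ℂ} (hz : ∀ u ∈ U, ‖z u‖ ≤ 1) (hz0 : ∑ u ∈ U, z u = 0) {d k : ℕ}
    (hd : 0 < d) (hU : #U ≤ d) {E : ℝ} (hE : 0 ≤ E) (hoff : ∀ x, N x ∉ U → z (N x) = 0)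
    (hk : #{x | N x ∉ U} ≤ k)
    (hfiber : ∀ u ∈ U, (#{x | N x = u} : ℝ) ≤ Fintype.card κ / d + E) :
    ‖∑ x, z (N x)‖ ≤ d * (k + d * E) := by
  set Q : ℝ := (Fintype.card κ : ℝ)
  set n : ι → ℝ := fun u => #{x | N x = u}
  have hfiberwise (u : ι) (hu : u ∈ U) :
      (univ.filter (N · ∈ U)).filter (N · = u) = univ.filter (N · = u) := by
    grind
  have hmaps : ∀ x ∈ ({x | N x ∈ U} : Finset κ), N x ∈ U := by simp
  have hsum : ∑ x, z (N x) = ∑ u ∈ U, z u * (n u - Q / d : ℝ) := by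
    have hin : ∑ x, z (N x) = ∑ x with N x ∈ U, z (N x) :=
      (Finset.sum_filter_of_ne fun x _ hx => by_contra fun h => hx (hoff x h)).symm
    push_cast
    simp only [mul_sub, Finset.sum_sub_distrib, ← Finset.sum_mul, hz0, zero_mul, sub_zero]
    rw [hin, ← Finset.sum_fiberwise_of_maps_to hmaps]
    refine Finset.sum_congr rfl fun u hu => ?_
    rw [hfiberwise u hu, Finset.sum_congr rfl fun x hx => by rw [(Finset.mem_filter.1 hx).2]]
    simp [n, mul_comm]
  have htotal : Q - k ≤ ∑ u ∈ U, n u := by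
    have hcard := Finset.card_filter_add_card_filter_not (s := (univ : Finset κ)) fun x => N x ∈ U
    rw [Finset.card_eq_sum_card_fiberwise hmaps,
      Finset.sum_congr rfl fun u hu => by rw [hfiberwise u hu]] at hcard
    have hle : Fintype.card κ ≤ ∑ u ∈ U, #{x | N x = u} + k := by
      rw [← Finset.card_univ, ← hcard]; gcongr
    rw [sub_le_iff_le_add]
    simp only [Q, n]
    exact_mod_cast hle
  calc ‖∑ x, z (N x)‖ ≤ ∑ u ∈ U, ‖z u * (n u - Q / d : ℝ)‖ := hsum ▸ norm_sum_le _ _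
    _ ≤ ∑ _ ∈ U, (k + d * E) := by
      refine Finset.sum_le_sum fun u hu => ?_
      rw [norm_mul, Complex.norm_real, Real.norm_eq_abs, ← one_mul ((k : ℝ) + d * E)]
      exact mul_le_mul (hz u hu) (abs_sub_div_le_of_forall_le hd hU (Nat.cast_nonneg _) hE
        (Nat.cast_nonneg _) hfiber htotal hu) (abs_nonneg _) zero_le_one
    _ = #U * (k + d * E) := by rw [Finset.sum_const, nsmul_eq_mul]
    _ ≤ d * (k + d * E) := by gcongr

section

variable {F K : Type*} [Field F] [Fintype F] [Field K] [Fintype K] [Algebra F K] {d g : ℕ}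

theorem algebraMap_norm_pow_eq (hdg : g * d = Fintype.card F - 1) {M : ℕ}
    (hM : d * M + 1 = Fintype.card K) (y : K) :
    algebraMap F K (Algebra.norm F (y ^ g)) = y ^ M := by
  have hq : 0 < g * d := hdg ▸ Nat.sub_pos_of_lt Fintype.one_lt_card
  obtain ⟨m, hm⟩ : Fintype.card F - 1 ∣ Fintype.card K - 1 := by
    rw [Module.card_eq_pow_finrank (K := F) (V := K)]
    simpa using Nat.sub_dvd_pow_sub_pow (Fintype.card F) 1 (Module.finrank F K)
  have hMm : M = g * m := by
    refine Nat.eq_of_mul_eq_mul_left (Nat.pos_of_mul_pos_left hq) ?_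
    rw [← Nat.add_sub_cancel (n := d * M) (m := 1), hM, hm, ← hdg]
    ring
  rw [FiniteField.algebraMap_norm_eq_pow, Nat.card_eq_fintype_card, Nat.card_eq_fintype_card, hm,
    Nat.mul_div_cancel_left _ (hdg ▸ hq), ← pow_mul, ← hMm]

theorem card_norm_aeval_pow_eq_le [DecidableEq F] (hdg : g * d = Fintype.card F - 1) {h : F[X]}
    (hh : HasOrderModPow (h.map (algebraMap F K)) d) (h0 : h.eval 0 ≠ 0) {t : ℕ} (hd : 0 < d)
    (hcard : Fintype.card K = (d * t + 1) ^ 2) (ht : h.natDegree < t) (u : F) :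
    (#{x : K | Algebra.norm F (aeval x h ^ g) = u} : ℝ) ≤
      Fintype.card K / d + (5 * h.natDegree + 4) * (d * t + 1) := by
  classical
  set δ := h.natDegree with hδ
  have hM : d * (d * t ^ 2 + 2 * t) + 1 = Fintype.card K := by rw [hcard]; ring
  have hfiber (x : K) : (h.map (algebraMap F K)).eval x ^ (d * t ^ 2 + 2 * t) = algebraMap F K u ↔
      Algebra.norm F (aeval x h ^ g) = u := by
    rw [eval_map_algebraMap, ← algebraMap_norm_pow_eq hdg hM, (algebraMap F K).injective.eq_iff]
  have hstepanov := hh.card_eval_pow_eq_mul_le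
    (by rwa [← (algebraMap F K).map_zero, eval_map_apply, (algebraMap F K).injective.ne_iff])
    hd hcard rfl (by rwa [natDegree_map]) (algebraMap F K u)
  simp only [hfiber, natDegree_map, hcard, ← hδ] at hstepanov
  set n := #{x : K | Algebra.norm F (aeval x h ^ g) = u}
  have hstepanov' : (n : ℝ) * (d * t) ≤
      δ * (d * t) + (d * t + 1 : ℝ) ^ 2 * (t + 2 * δ + 2) := by exact_mod_cast hstepanov
  have hdt : (1 : ℝ) ≤ d * t := by
    exact_mod_cast Nat.mul_pos hd (Nat.zero_lt_of_lt ht)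
  refine le_of_mul_le_mul_right (hstepanov'.trans ?_) (zero_lt_one.trans_le hdt)
  have hd' : (d : ℝ) ≠ 0 := by exact_mod_cast hd.ne'
  have hexpand : ((Fintype.card K : ℝ) / d + (5 * δ + 4) * (d * t + 1)) * (d * t) =
      (d * t + 1) ^ 2 * t + (5 * δ + 4) * (d * t + 1) * (d * t) := by
    rw [hcard]; push_cast; field_simp
  rw [hexpand]
  have hδ0 : (0 : ℝ) ≤ δ := Nat.cast_nonneg _
  set w : ℝ := d * t
  have hw : 0 ≤ w - 1 := sub_nonneg.2 hdt
  nlinarith [mul_nonneg hδ0 hw, mul_nonneg (mul_nonneg hδ0 hw) (zero_le_one.trans hdt),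
    mul_nonneg hw (zero_le_one.trans hdt)]

theorem norm_sum_mulChar_norm_aeval_pow_le_of_lt {χ : MulChar F ℂ} (hχ : χ ^ g ≠ 1)
    (hdg : g * d = Fintype.card F - 1) {h : F[X]} (hh : HasOrderModPow (h.map (algebraMap F K)) d)
    (h0 : h.eval 0 ≠ 0) {t : ℕ} (hcard : Fintype.card K = (d * t + 1) ^ 2)
    (ht : h.natDegree < t) :
    ‖∑ x : K, χ (Algebra.norm F (aeval x h ^ g))‖ ≤
      d * (h.natDegree + d * ((5 * h.natDegree + 4) * (d * t + 1))) := by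
  classical
  have hgd : 0 < g * d := hdg ▸ Nat.sub_pos_of_lt Fintype.one_lt_card
  have hd : 0 < d := Nat.pos_of_mul_pos_left hgd
  have hM : d * (d * t ^ 2 + 2 * t) + 1 = Fintype.card K := by rw [hcard]; ring
  have hroot (x : K) (hx : Algebra.norm F (aeval x h ^ g) ^ d ≠ 1) : aeval x h = 0 := by
    contrapose! hx
    refine (algebraMap F K).injective ?_
    rw [map_pow, algebraMap_norm_pow_eq hdg hM, ← pow_mul, mul_comm, Nat.eq_sub_of_add_eq hM,
      FiniteField.pow_card_sub_one_eq_one _ hx, map_one]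
  have h0' : h ≠ 0 := by rintro rfl; simp at h0
  refine norm_sum_comp_le_of_card_fiber_le (U := {u : F | u ^ d = 1})
    (fun u _ => norm_mulChar_le_one χ u) (sum_mulChar_pow_eq_one_eq_zero hdg hχ) hd ?_
    (by positivity) ?_ ?_ fun u _ => card_norm_aeval_pow_eq_le hdg hh h0 hd hcard ht u
  · refine (Finset.card_le_card (t := (nthRoots d (1 : F)).toFinset) fun u hu => ?_).trans
      ((Multiset.toFinset_card_le _).trans (card_nthRoots _ _))
    simpa [mem_nthRoots hd] using hu
  · intro x hx
    rw [hroot x (by simpa using hx), zero_pow (Nat.pos_of_mul_pos_right hgd).ne',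
      Algebra.norm_zero, MulChar.map_zero]
  · refine (Finset.card_le_card (t := (h.aroots K).toFinset) fun x hx => ?_).trans
      ((Multiset.toFinset_card_le _).trans ((card_roots' _).trans natDegree_map_le))
    simpa [mem_aroots, h0'] using hroot x (by simpa using hx)

theorem norm_sum_mulChar_norm_aeval_pow_le {χ : MulChar F ℂ} (hχ : χ ^ g ≠ 1)
    (hdg : g * d = Fintype.card F - 1) {h : F[X]} (hh : HasOrderModPow (h.map (algebraMap F K)) d)
    (h0 : h.eval 0 ≠ 0) {n : ℕ} (hcard : Fintype.card K = Fintype.card F ^ (2 * n)) :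
    ‖∑ x : K, χ (Algebra.norm F (aeval x h ^ g))‖ ≤
      (d * (h.natDegree + d * (5 * h.natDegree + 4)) + (d * h.natDegree + 1)) *
        (Fintype.card F : ℝ) ^ n := by
  set q := Fintype.card F
  set δ := h.natDegree
  obtain ⟨t, ht⟩ : d ∣ q ^ n - 1 :=
    (Dvd.intro_left g hdg).trans (by simpa using Nat.sub_dvd_pow_sub_pow q 1 n)
  have hqn : q ^ n = d * t + 1 := by
    have : 0 < q ^ n := pow_pos Fintype.card_pos n
    lia
  have hsq : Fintype.card K = (d * t + 1) ^ 2 := by rw [hcard, ← hqn, ← pow_mul, mul_comm]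
  rw [← Nat.cast_pow, hqn]
  push_cast
  rcases lt_or_ge δ t with hδ | hδ
  · refine (norm_sum_mulChar_norm_aeval_pow_le_of_lt hχ hdg hh h0 hsq hδ).trans ?_
    have hpos : (0 : ℝ) ≤ d * t := by positivity
    have hδ0 : (0 : ℝ) ≤ d * δ := by positivity
    nlinarith [mul_nonneg hδ0 hpos]
  · calc ‖∑ x : K, χ (Algebra.norm F (aeval x h ^ g))‖ ≤ ∑ _ : K, (1 : ℝ) :=
          norm_sum_le_of_le _ fun _ _ => norm_mulChar_le_one χ _
      _ = (d * t + 1 : ℝ) * (d * t + 1) := by simp [hsq, sq]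
      _ ≤ _ := by
        refine mul_le_mul_of_nonneg_right ?_ (by positivity)
        have hnonneg : (0 : ℝ) ≤ d * (δ + d * (5 * δ + 4)) := by positivity
        have hdtδ : (d * t : ℝ) ≤ d * δ := by gcongr
        linarith

end

theorem exists_norm_sum_mulChar_norm_prod_le {F : Type*} [Field F] [Fintype F] {χ : MulChar F ℂ}
    {s : Finset F} (h0 : 0 ∉ s) {e : F → ℕ} {c₀ : F} (hc₀ : c₀ ∈ s) (hχ : χ ^ e c₀ ≠ 1) :
    ∃ A : ℝ, ∀ (n : ℕ) (K : Type*) [Field K] [Fintype K] [Algebra F K],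
      Fintype.card K = Fintype.card F ^ (2 * n) →
      ‖∑ x : K, χ (Algebra.norm F (∏ c ∈ s, (x + algebraMap F K c) ^ e c))‖ ≤
        A * (Fintype.card F : ℝ) ^ n := by
  have hq : 0 < Fintype.card F - 1 := Nat.sub_pos_of_lt Fintype.one_lt_card
  set g := (Fintype.card F - 1).gcd (s.gcd e) with hg
  have hgpos : 0 < g := Nat.gcd_pos_of_pos_left _ hq
  have hge : ∀ c ∈ s, e c = g * (e c / g) := fun c hc =>
    (Nat.mul_div_cancel' ((Nat.gcd_dvd_right _ _).trans (Finset.gcd_dvd hc))).symm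
  have hχg : χ ^ g ≠ 1 := fun h => hχ (by rw [hge c₀ hc₀, pow_mul, h, one_pow])
  obtain ⟨d, hd⟩ : g ∣ Fintype.card F - 1 := Nat.gcd_dvd_left _ _
  have hcop : d.Coprime (s.gcd fun c => e c / g) := by
    have hgcd : s.gcd e = g * s.gcd fun c => e c / g := by
      rw [Finset.gcd_congr rfl hge, Finset.gcd_mul_left, normalize_eq]
    refine Nat.eq_of_mul_eq_mul_left hgpos ?_
    rw [← Nat.gcd_mul_left, ← hgcd, ← hd, ← hg, mul_one]
  set h : F[X] := ∏ c ∈ s, (X + C c) ^ (e c / g)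
  have hh0 : h.eval 0 ≠ 0 := by
    rw [eval_prod, Finset.prod_ne_zero_iff]
    intro c hc
    simpa using fun hc0 : c = 0 => absurd (hc0 ▸ hc) h0
  refine ⟨d * (h.natDegree + d * (5 * h.natDegree + 4)) + (d * h.natDegree + 1),
    fun n K _ _ _ hcard => ?_⟩
  have hh : HasOrderModPow (h.map (algebraMap F K)) d := by
    simpa [h, Polynomial.map_prod] using
      hasOrderModPow_prod_X_add_C_pow (algebraMap F K).injective.injOn hcop
  refine le_of_eq_of_le ?_ (norm_sum_mulChar_norm_aeval_pow_le hχg hd.symm hh hh0 hcard)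
  congr! 5 with x
  simp only [h, map_prod, map_pow, map_add, aeval_X, aeval_C, ← Finset.prod_pow]
  refine Finset.prod_congr rfl fun c hc => ?_
  rw [← pow_mul, mul_comm, ← hge c hc]

end ExtensionBound

section PowerSums

open Polynomial

theorem exists_eq_esymm_of_forall_lt_eq_zero {k : Type*} [Field k] [IsAlgClosed k] {a : ℕ → k}
    {m : ℕ} (ha0 : a 0 = 1) (ha : ∀ n, m < n → a n = 0) :
    ∃ α : Fin m → k, ∀ n, a n = (-1) ^ n * (univ.val.map α).esymm n := by
  set R : k[X] := ∑ n ∈ range (m + 1), monomial (m - n) (a n)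
  have hcoeff (n : ℕ) (hn : n ≤ m) : R.coeff (m - n) = a n := by
    rw [finsetSum_coeff, Finset.sum_eq_single_of_mem n (by grind), coeff_monomial_same]
    exact fun i hi hin => coeff_monomial_of_ne _ (by grind)
  have hdeg : R.natDegree ≤ m :=
    natDegree_sum_le_of_forall_le _ _ fun _ _ => (natDegree_monomial_le _).trans (Nat.sub_le _ _)
  have hlead : R.coeff m = 1 := ha0 ▸ hcoeff 0 m.zero_le
  have hmonic : R.Monic := monic_of_natDegree_le_of_coeff_eq_one m hdeg hlead
  have hnatDegree : R.natDegree = m :=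
    hdeg.antisymm (le_natDegree_of_ne_zero (hlead ▸ one_ne_zero))
  have hcard : Multiset.card R.roots = R.natDegree :=
    (IsAlgClosed.splits R).natDegree_eq_card_roots.symm
  have hlength : R.roots.toList.length = m := by rw [Multiset.length_toList, hcard, hnatDegree]
  obtain ⟨α, hα⟩ : ∃ α : Fin m → k, univ.val.map α = R.roots := by
    refine ⟨fun i => R.roots.toList.get (i.cast hlength.symm), ?_⟩
    rw [Fin.univ_val_map]
    refine Eq.trans ?_ (Multiset.coe_toList R.roots)
    exact congrArg _ (List.ext_get (by simp [hlength]) fun _ _ _ => by simp)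
  refine ⟨α, fun n => ?_⟩
  rcases le_or_gt n m with hn | hn
  · rw [← hcoeff n hn, coeff_eq_esymm_roots_of_card hcard (by lia), hmonic.leadingCoeff,
      hnatDegree, Nat.sub_sub_self hn, one_mul, hα]
  · rw [ha n hn, Multiset.esymm, Multiset.powersetCard_eq_empty _ (by simpa using hn)]
    simp

theorem natCast_mul_neg_one_pow_mul_esymm {R : Type*} [CommRing R] {m : ℕ} (α : Fin m → R)
    (n : ℕ) :
    (n : R) * ((-1) ^ n * (univ.val.map α).esymm n) =
      ∑ x ∈ antidiagonal n with x.1 < n,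
        (-1) ^ x.1 * (univ.val.map α).esymm x.1 * -∑ i, α i ^ x.2 := by
  have hnewton := congrArg (MvPolynomial.aeval α) (MvPolynomial.mul_esymm_eq_sum (Fin m) R n)
  simp only [map_mul, map_natCast, map_pow, map_neg, map_one, map_sum,
    MvPolynomial.aeval_esymm_eq_multiset_esymm, MvPolynomial.psum, MvPolynomial.aeval_X]
    at hnewton
  have hsign : (-1 : R) ^ (n + (n + 1)) = -1 := Odd.neg_one_pow ⟨n, by ring⟩
  rw [mul_left_comm, hnewton, ← mul_assoc, ← pow_add, hsign, neg_one_mul]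
  simp only [mul_neg, Finset.sum_neg_distrib]

theorem eq_of_newton_recursion {R : Type*} [CommRing R] {a s s' : ℕ → R} (ha0 : a 0 = 1)
    (h : ∀ n, ∑ x ∈ antidiagonal n with x.1 < n, a x.1 * s x.2 =
      ∑ x ∈ antidiagonal n with x.1 < n, a x.1 * s' x.2) {n : ℕ} (hn : 0 < n) : s n = s' n := by
  induction n using Nat.strong_induction_on with
  | _ n ih =>
    have hmem : ((0, n) : ℕ × ℕ) ∈ (antidiagonal n).filter (·.1 < n) := by simpa
    have hrec := h n
    rw [← Finset.add_sum_erase _ _ hmem, ← Finset.add_sum_erase _ _ hmem] at hrec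
    have hlower : ∀ x ∈ ((antidiagonal n).filter (·.1 < n)).erase (0, n),
        a x.1 * s x.2 = a x.1 * s' x.2 := by
      rintro ⟨i, j⟩ hx
      simp only [mem_erase, ne_eq, Prod.mk.injEq, mem_filter, HasAntidiagonal.mem_antidiagonal]
        at hx
      rw [ih j (by lia) (by lia)]
    rw [Finset.sum_congr rfl hlower] at hrec
    simpa [ha0] using hrec

theorem exists_eq_neg_sum_pow_of_newton_recursion {k : Type*} [Field k] [IsAlgClosed k]
    {a s : ℕ → k} {m : ℕ} (ha0 : a 0 = 1) (ha : ∀ n, m < n → a n = 0)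
    (hrec : ∀ n : ℕ, (n : k) * a n = ∑ x ∈ antidiagonal n with x.1 < n, a x.1 * s x.2) :
    ∃ α : Fin m → k, ∀ n, 0 < n → s n = -∑ i, α i ^ n := by
  obtain ⟨α, hα⟩ := exists_eq_esymm_of_forall_lt_eq_zero ha0 ha
  refine ⟨α, fun n hn => eq_of_newton_recursion (s' := fun n => -∑ i, α i ^ n) ha0
    (fun n => (hrec n).symm.trans ?_) hn⟩
  simp only [hα, natCast_mul_neg_one_pow_mul_esymm]

-- The powers of a point of a compact torus return to every neighbourhood of the identity.
theorem frequently_forall_half_lt_re_pow {ι : Type*} [Finite ι] (u : ι → Circle) :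
    ∃ᶠ n : ℕ in Filter.atTop, ∀ i, (1 / 2 : ℝ) < ((u i : ℂ) ^ n).re := by
  have hopen : IsOpen (⋂ i, {v : ι → Circle | (1 / 2 : ℝ) < (v i : ℂ).re}) :=
    isOpen_iInter_of_finite fun i => isOpen_lt continuous_const
      (Complex.continuous_re.comp (continuous_subtype_val.comp (continuous_apply i)))
  refine ((mapClusterPt_one_atTop_pow u).frequently (hopen.mem_nhds ?_)).mono fun n hn i => ?_
  · simp only [Set.mem_iInter, Set.mem_ofPred_eq, Pi.one_apply, Circle.coe_one, Complex.one_re]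
    norm_num
  · simpa using Set.mem_iInter.1 hn i

theorem frequently_half_mul_norm_pow_le {ι : Type*} [Fintype ι] (β : ι → ℂ) (i₀ : ι) :
    ∃ᶠ n : ℕ in Filter.atTop, ‖β i₀‖ ^ n / 2 ≤ ‖∑ i, β i ^ n‖ := by
  have hpolar (i : ι) : (‖β i‖ : ℂ) * Circle.exp (Complex.arg (β i)) = β i :=
    Complex.norm_mul_exp_arg_mul_I (β i)
  refine (frequently_forall_half_lt_re_pow fun i => Circle.exp (Complex.arg (β i))).mono
    fun n hn => ?_
  calc ‖β i₀‖ ^ n / 2 ≤ ∑ i, ‖β i‖ ^ n / 2 :=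
        Finset.single_le_sum (f := fun i => ‖β i‖ ^ n / 2) (fun i _ => by positivity) (mem_univ i₀)
    _ ≤ ∑ i, (β i ^ n).re := Finset.sum_le_sum fun i _ => by
        rw [← hpolar i, mul_pow, ← Complex.ofReal_pow, Complex.re_ofReal_mul, hpolar i,
          div_eq_mul_one_div]
        exact mul_le_mul_of_nonneg_left (hn i).le (by positivity)
    _ ≤ ‖∑ i, β i ^ n‖ := Complex.re_sum _ _ ▸ Complex.re_le_norm _

theorem norm_le_of_norm_sum_pow_le {ι : Type*} [Fintype ι] {β : ι → ℂ} {A q : ℝ} (hq : 0 < q)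
    (h : ∀ n : ℕ, 0 < n → ‖∑ i, β i ^ n‖ ≤ A * q ^ n) (i : ι) : ‖β i‖ ≤ q := by
  by_contra! hlt
  have hgrowth := (tendsto_pow_atTop_atTop_of_one_lt ((one_lt_div hq).2 hlt)).eventually_gt_atTop
    (2 * A)
  obtain ⟨n, hlower, hn, hpos⟩ := ((frequently_half_mul_norm_pow_le β i).and_eventually
    (hgrowth.and (Filter.eventually_gt_atTop 0))).exists
  rw [div_pow, lt_div_iff₀ (by positivity)] at hn
  linarith [h n hpos]

end PowerSums

section EulerProduct

open Polynomial UniqueFactorizationMonoid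

variable {F : Type*} [Field F]

theorem finite_setOf_monic_natDegree_eq [Finite F] (n : ℕ) :
    {g : F[X] | g.Monic ∧ g.natDegree = n}.Finite := by
  have : Finite (degreeLT F n) := Module.finite_of_finite F
  exact Finite.of_equiv _ (monicEquivDegreeLT n).symm

/-- The monic polynomials of degree `n` over a finite field. -/
noncomputable def monicsOfDegree (F : Type*) [Field F] [Finite F] (n : ℕ) : Finset F[X] :=
  (finite_setOf_monic_natDegree_eq n).toFinset

theorem mem_monicsOfDegree [Finite F] {n : ℕ} {g : F[X]} :
    g ∈ monicsOfDegree F n ↔ g.Monic ∧ g.natDegree = n :=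
  Set.Finite.mem_toFinset _

open scoped Classical in
/-- The prime powers of degree `n` in `F[X]`, where `P ^ j` with `P` monic irreducible and `0 < j`
is encoded as the pair `(P, j)`. -/
noncomputable def primePowersOfDegree (F : Type*) [Field F] [Finite F] (n : ℕ) :
    Finset (F[X] × ℕ) :=
  ((range (n + 1)).biUnion (monicsOfDegree F) ×ˢ range (n + 1)).filter fun x =>
    Irreducible x.1 ∧ 0 < x.2 ∧ x.1.natDegree * x.2 = n

theorem mem_primePowersOfDegree [Finite F] {n : ℕ} {x : F[X] × ℕ} :
    x ∈ primePowersOfDegree F n ↔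
      x.1.Monic ∧ Irreducible x.1 ∧ 0 < x.2 ∧ x.1.natDegree * x.2 = n := by
  simp only [primePowersOfDegree, mem_filter, mem_product, mem_biUnion, mem_monicsOfDegree,
    Finset.mem_range]
  constructor
  · rintro ⟨⟨⟨d, -, hmonic, -⟩, -⟩, h⟩
    exact ⟨hmonic, h⟩
  · rintro ⟨hmonic, hirr, hpos, hdeg⟩
    have hle : x.1.natDegree ≤ n := hdeg ▸ Nat.le_mul_of_pos_right _ hpos
    have hle' : x.2 ≤ n := hdeg ▸ Nat.le_mul_of_pos_left _ hirr.natDegree_pos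
    exact ⟨⟨⟨_, Nat.lt_succ_of_le hle, hmonic, rfl⟩, Nat.lt_succ_of_le hle'⟩, hirr, hpos, hdeg⟩

section

variable [DecidableEq F] {g : F[X]}

theorem monic_of_mem_normalizedFactors {P : F[X]} (hP : P ∈ normalizedFactors g) : P.Monic :=
  normalize_normalized_factor P hP ▸ monic_normalize (irreducible_of_normalized_factor P hP).ne_zero

theorem natDegree_eq_sum_count_normalizedFactors (hg : g.Monic) :
    g.natDegree = ∑ P ∈ (normalizedFactors g).toFinset,
      (normalizedFactors g).count P * P.natDegree := by
  have hprod : (normalizedFactors g).prod = g := by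
    rw [prod_normalizedFactors_eq hg.ne_zero, hg.normalize_eq_self]
  conv_lhs => rw [← hprod]
  rw [natDegree_multiset_prod_of_monic _ fun _ => monic_of_mem_normalizedFactors,
    Finset.sum_multiset_map_count]
  simp only [smul_eq_mul]

theorem pow_dvd_iff_le_count_normalizedFactors (hg : g ≠ 0) {P : F[X]} (hP : P.Monic)
    (hPi : Irreducible P) {j : ℕ} : P ^ j ∣ g ↔ j ≤ (normalizedFactors g).count P := by
  rw [pow_dvd_iff_le_emultiplicity, emultiplicity_eq_count_normalizedFactors hPi hg,
    hP.normalize_eq_self, Nat.cast_le]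

end

-- Both sides count each prime power divisor of `g` with the degree of its prime.
open scoped Classical in
theorem sum_primePowersOfDegree_dvd_eq_natDegree [Finite F] {g : F[X]} (hg : g.Monic) :
    ∑ m ∈ Icc 1 g.natDegree, ∑ x ∈ primePowersOfDegree F m with x.1 ^ x.2 ∣ g, x.1.natDegree =
      g.natDegree := by
  symm
  calc g.natDegree = ∑ P ∈ (normalizedFactors g).toFinset,
        ∑ _j ∈ Icc 1 ((normalizedFactors g).count P), P.natDegree := by
        simpa using natDegree_eq_sum_count_normalizedFactors hg
    _ = _ := by
        rw [Finset.sum_sigma', Finset.sum_sigma']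
        refine Finset.sum_bij' (fun y _ => ⟨y.1.natDegree * y.2, (y.1, y.2)⟩)
          (fun y _ => ⟨y.2.1, y.2.2⟩) ?_ ?_ (fun _ _ => rfl) ?_ fun _ _ => rfl
        · rintro ⟨P, j⟩ hy
          simp only [mem_sigma, Multiset.mem_toFinset, mem_Icc, Nat.one_le_iff_ne_zero] at hy
          obtain ⟨hP, hj, hcount⟩ := hy
          have hirr := irreducible_of_normalized_factor P hP
          have hmonic := monic_of_mem_normalizedFactors hP
          have hdvd := (pow_dvd_iff_le_count_normalizedFactors hg.ne_zero hmonic hirr).2 hcount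
          have hle := natDegree_le_of_dvd hdvd hg.ne_zero
          rw [natDegree_pow, mul_comm] at hle
          simp only [mem_sigma, mem_Icc, mem_filter, mem_primePowersOfDegree]
          exact ⟨⟨Nat.mul_pos hirr.natDegree_pos (Nat.pos_of_ne_zero hj), hle⟩,
            ⟨hmonic, hirr, Nat.pos_of_ne_zero hj, trivial⟩, hdvd⟩
        · rintro ⟨m, P, j⟩ hy
          simp only [mem_sigma, mem_filter, mem_primePowersOfDegree] at hy
          obtain ⟨-, ⟨hmonic, hirr, hj, -⟩, hdvd⟩ := hy
          rw [pow_dvd_iff_le_count_normalizedFactors hg.ne_zero hmonic hirr] at hdvd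
          simp only [mem_sigma, Multiset.mem_toFinset, mem_Icc]
          exact ⟨Multiset.count_pos.1 (hj.trans_le hdvd), hj, hdvd⟩
        · rintro ⟨m, P, j⟩ hy
          simp only [mem_sigma, mem_filter, mem_primePowersOfDegree] at hy
          simp only [hy.2.1.2.2.2]

open scoped Classical in
theorem sum_monicsOfDegree_dvd [Finite F] {R : Type*} [CommSemiring R] (X : F[X] →* R) {Q : F[X]}
    (hQ : Q.Monic) {n : ℕ} (hn : Q.natDegree ≤ n) :
    ∑ g ∈ monicsOfDegree F n with Q ∣ g, X g =
      X Q * ∑ g ∈ monicsOfDegree F (n - Q.natDegree), X g := by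
  rw [Finset.mul_sum]
  symm
  refine Finset.sum_bij (fun g _ => Q * g) ?_ (fun _ _ _ _ h => mul_left_cancel₀ hQ.ne_zero h) ?_
    fun g _ => (map_mul X Q g).symm
  · intro g hg
    obtain ⟨hmonic, hdeg⟩ := mem_monicsOfDegree.1 hg
    rw [mem_filter, mem_monicsOfDegree]
    exact ⟨⟨hQ.mul hmonic, by rw [hQ.natDegree_mul hmonic]; lia⟩, dvd_mul_right _ _⟩
  · intro g hg
    rw [mem_filter, mem_monicsOfDegree] at hg
    obtain ⟨⟨hmonic, hdeg⟩, f, rfl⟩ := hg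
    have hf : f.Monic := hQ.of_mul_monic_left hmonic
    rw [hQ.natDegree_mul hf] at hdeg
    exact ⟨f, mem_monicsOfDegree.2 ⟨hf, by lia⟩, rfl⟩

-- The logarithmic derivative of the Euler product of `∑ g, X g * T ^ deg g`, coefficientwise.
theorem natCast_mul_sum_monicsOfDegree [Finite F] {R : Type*} [CommSemiring R] (X : F[X] →* R)
    (n : ℕ) :
    (n : R) * ∑ g ∈ monicsOfDegree F n, X g =
      ∑ x ∈ antidiagonal n with x.1 < n, (∑ g ∈ monicsOfDegree F x.1, X g) *
        ∑ y ∈ primePowersOfDegree F x.2, y.1.natDegree * X y.1 ^ y.2 := by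
  classical
  calc (n : R) * ∑ g ∈ monicsOfDegree F n, X g
      = ∑ g ∈ monicsOfDegree F n, ∑ m ∈ Icc 1 n, ∑ y ∈ primePowersOfDegree F m with y.1 ^ y.2 ∣ g,
          (y.1.natDegree : R) * X g := by
        rw [Finset.mul_sum]
        refine Finset.sum_congr rfl fun g hg => ?_
        obtain ⟨hmonic, rfl⟩ := mem_monicsOfDegree.1 hg
        conv_lhs => rw [← sum_primePowersOfDegree_dvd_eq_natDegree hmonic]
        push_cast
        simp only [Finset.sum_mul]
    _ = ∑ m ∈ Icc 1 n, ∑ y ∈ primePowersOfDegree F m,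
          (y.1.natDegree : R) * ∑ g ∈ monicsOfDegree F n with y.1 ^ y.2 ∣ g, X g := by
        rw [Finset.sum_comm]
        refine Finset.sum_congr rfl fun m _ => ?_
        simp only [Finset.sum_filter, Finset.mul_sum, mul_ite, mul_zero]
        rw [Finset.sum_comm]
    _ = ∑ m ∈ Icc 1 n, (∑ g ∈ monicsOfDegree F (n - m), X g) *
          ∑ y ∈ primePowersOfDegree F m, (y.1.natDegree : R) * X y.1 ^ y.2 := by
        refine Finset.sum_congr rfl fun m hm => ?_
        rw [Finset.mul_sum]
        refine Finset.sum_congr rfl fun y hy => ?_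
        obtain ⟨hmonic, -, -, hdeg⟩ := mem_primePowersOfDegree.1 hy
        have hpow : (y.1 ^ y.2).natDegree = m := by rw [natDegree_pow, mul_comm, hdeg]
        rw [sum_monicsOfDegree_dvd X (hmonic.pow _) (hpow.trans_le (mem_Icc.1 hm).2), hpow, map_pow]
        ring
    _ = _ := by
        refine Finset.sum_nbij' (fun m => (n - m, m)) Prod.snd ?_ ?_ (fun _ _ => rfl) ?_
          fun _ _ => rfl
        all_goals simp only [mem_Icc, mem_filter, HasAntidiagonal.mem_antidiagonal, Prod.forall,
          Prod.mk.injEq]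
        all_goals lia

end EulerProduct

section LFunction

open Polynomial

variable {F : Type*} [Field F]

/-- The monoid homomorphism `g ↦ χ (∏ c ∈ s, g(c) ^ e c)` on `F[X]`, whose `L`-function controls
the sums of `χ (∏ c ∈ s, (x + c) ^ e c)` over all finite extensions of `F`. -/
noncomputable def evalProdChar (χ : MulChar F ℂ) (s : Finset F) (e : F → ℕ) : F[X] →* ℂ where
  toFun g := χ (∏ c ∈ s, g.eval c ^ e c)
  map_one' := by simp
  map_mul' g h := by simp only [eval_mul, mul_pow, Finset.prod_mul_distrib, map_mul]

theorem evalProdChar_apply (χ : MulChar F ℂ) (s : Finset F) (e : F → ℕ) (g : F[X]) :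
    evalProdChar χ s e g = χ (∏ c ∈ s, g.eval c ^ e c) := rfl

theorem sum_monicsOfDegree_zero [Finite F] {R : Type*} [CommSemiring R] (X : F[X] →* R) :
    ∑ g ∈ monicsOfDegree F 0, X g = 1 := by
  have : monicsOfDegree F 0 = {1} := by
    ext g
    rw [mem_monicsOfDegree, mem_singleton]
    exact ⟨fun h => eq_one_of_monic_natDegree_zero h.1 h.2,
      fun h => h ▸ ⟨monic_one, natDegree_one⟩⟩
  rw [this, Finset.sum_singleton, map_one]

section Vanishing

variable [DecidableEq F] {s : Finset F} {c₀ : F}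

/-- The polynomial with the values of `g` on `s`, except for the value at `c₀ ∈ s`, which is
multiplied by `w`. -/
noncomputable def scaleEvalAt (s : Finset F) (c₀ w : F) (g : F[X]) : F[X] :=
  g + C ((w - 1) * g.eval c₀) * Lagrange.basis s id c₀

theorem eval_scaleEvalAt_self (hc₀ : c₀ ∈ s) (w : F) (g : F[X]) :
    (scaleEvalAt s c₀ w g).eval c₀ = w * g.eval c₀ := by
  have hbasis : (Lagrange.basis s id c₀).eval c₀ = 1 :=
    Lagrange.eval_basis_self Function.injective_id.injOn hc₀
  rw [scaleEvalAt, eval_add, eval_mul, eval_C, hbasis]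
  ring

theorem eval_scaleEvalAt_of_ne {c : F} (hc : c ∈ s) (hne : c ≠ c₀) (w : F) (g : F[X]) :
    (scaleEvalAt s c₀ w g).eval c = g.eval c := by
  have hbasis : (Lagrange.basis s id c₀).eval c = 0 :=
    Lagrange.eval_basis_of_ne (v := id) hne.symm hc
  rw [scaleEvalAt, eval_add, eval_mul, hbasis, mul_zero, add_zero]

theorem scaleEvalAt_scaleEvalAt (hc₀ : c₀ ∈ s) {w w' : F} (hw : w' * w = 1) (g : F[X]) :
    scaleEvalAt s c₀ w' (scaleEvalAt s c₀ w g) = g := by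
  rw [scaleEvalAt, eval_scaleEvalAt_self hc₀, scaleEvalAt, add_assoc, ← add_mul, ← C_add,
    show (w - 1) * g.eval c₀ + (w' - 1) * (w * g.eval c₀) = 0 by
      linear_combination g.eval c₀ * hw]
  simp

theorem scaleEvalAt_mem_monicsOfDegree [Finite F] (hc₀ : c₀ ∈ s) {n : ℕ} (hn : #s ≤ n) (w : F)
    {g : F[X]} (hg : g ∈ monicsOfDegree F n) : scaleEvalAt s c₀ w g ∈ monicsOfDegree F n := by
  obtain ⟨hmonic, hdeg⟩ := mem_monicsOfDegree.1 hg
  have hlt : (C ((w - 1) * g.eval c₀) * Lagrange.basis s id c₀).degree < g.degree := by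
    rw [degree_eq_natDegree hmonic.ne_zero, hdeg, ← smul_eq_C_mul]
    refine (degree_smul_le _ _).trans_lt ?_
    rw [Lagrange.degree_basis Function.injective_id.injOn hc₀]
    have hpos : 0 < #s := Finset.card_pos.2 ⟨c₀, hc₀⟩
    exact_mod_cast (by lia : #s - 1 < n)
  exact mem_monicsOfDegree.2
    ⟨hmonic.add_of_left hlt, (natDegree_add_eq_left_of_degree_lt hlt).trans hdeg⟩

theorem evalProdChar_scaleEvalAt (χ : MulChar F ℂ) (e : F → ℕ) (hc₀ : c₀ ∈ s) (w : F) (g : F[X]) :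
    evalProdChar χ s e (scaleEvalAt s c₀ w g) = χ w ^ e c₀ * evalProdChar χ s e g := by
  rw [evalProdChar_apply, evalProdChar_apply, ← map_pow, ← map_mul,
    ← Finset.mul_prod_erase _ _ hc₀, ← Finset.mul_prod_erase _ _ hc₀,
    eval_scaleEvalAt_self hc₀, mul_pow, mul_assoc,
    Finset.prod_congr rfl fun c hc => by
      rw [eval_scaleEvalAt_of_ne (mem_of_mem_erase hc) (ne_of_mem_erase hc)]]

end Vanishing

-- In degree at least `#s` the values on `s` are unconstrained, so orthogonality applies at `c₀`.
theorem sum_evalProdChar_eq_zero [Finite F] {χ : MulChar F ℂ} {s : Finset F} {e : F → ℕ} {c₀ : F}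
    (hc₀ : c₀ ∈ s) (hχ : χ ^ e c₀ ≠ 1) {n : ℕ} (hn : #s ≤ n) :
    ∑ g ∈ monicsOfDegree F n, evalProdChar χ s e g = 0 := by
  classical
  obtain ⟨v, hv⟩ := MulChar.ne_one_iff.1 hχ
  rw [MulChar.pow_apply_coe] at hv
  have hperm : ∑ g ∈ monicsOfDegree F n, evalProdChar χ s e (scaleEvalAt s c₀ v g) =
      ∑ g ∈ monicsOfDegree F n, evalProdChar χ s e g :=
    Finset.sum_nbij' (scaleEvalAt s c₀ v) (scaleEvalAt s c₀ (v⁻¹ : Fˣ))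
      (fun _ => scaleEvalAt_mem_monicsOfDegree hc₀ hn _)
      (fun _ => scaleEvalAt_mem_monicsOfDegree hc₀ hn _)
      (fun g _ => scaleEvalAt_scaleEvalAt hc₀ v.inv_mul g)
      (fun g _ => scaleEvalAt_scaleEvalAt hc₀ v.mul_inv g) fun _ _ => rfl
  simp only [evalProdChar_scaleEvalAt χ e hc₀, ← Finset.mul_sum] at hperm
  exact (mul_left_eq_self₀.1 hperm).resolve_left hv

section Extension

variable {K : Type*} [Field K] [Algebra F K]

theorem norm_eq_coeff_zero_minpoly_pow [FiniteDimensional F K] (y : K) :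
    Algebra.norm F y = ((-1) ^ (minpoly F y).natDegree * (minpoly F y).coeff 0) ^
      (Module.finrank F K / (minpoly F y).natDegree) := by
  have hy : IsIntegral F y := Algebra.IsIntegral.isIntegral y
  have hgen := Algebra.PowerBasis.norm_gen_eq_coeff_zero_minpoly
    (IntermediateField.adjoin.powerBasis hy)
  rw [IntermediateField.adjoin.powerBasis_gen, IntermediateField.minpoly_gen,
    IntermediateField.adjoin.powerBasis_dim] at hgen
  have hfinrank := Module.finrank_mul_finrank F (IntermediateField.adjoin F {y}) K
  rw [IntermediateField.adjoin.finrank hy] at hfinrank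
  rw [Algebra.norm_eq_norm_adjoin, hgen, ← hfinrank,
    Nat.mul_div_cancel_left _ (minpoly.natDegree_pos hy)]

theorem norm_algebraMap_sub_eq_eval_minpoly_pow [FiniteDimensional F K] (c : F) (x : K) :
    Algebra.norm F (algebraMap F K c - x) =
      (minpoly F x).eval c ^ (Module.finrank F K / (minpoly F x).natDegree) := by
  have hx : IsIntegral F x := Algebra.IsIntegral.isIntegral x
  have hneg : Algebra.norm F (-1 : K) = (-1) ^ Module.finrank F K := by
    simpa using Algebra.norm_algebraMap (S := K) (-1 : F)
  obtain ⟨m, hm⟩ := minpoly.degree_dvd (K := F) hx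
  rw [← neg_sub, ← neg_one_mul, map_mul, hneg, norm_eq_coeff_zero_minpoly_pow,
    minpoly.sub_algebraMap, natDegree_comp, natDegree_X_add_C, mul_one,
    coeff_zero_eq_eval_zero, eval_comp, hm, Nat.mul_div_cancel_left _ (minpoly.natDegree_pos hx),
    pow_mul, ← mul_pow, ← mul_assoc, ← mul_pow]
  simp

variable [Finite F] [Fintype K]

theorem card_minpoly_eq [DecidableEq F[X]] {P : F[X]} (hP : P.Monic) (hPi : Irreducible P)
    (hdvd : P.natDegree ∣ Module.finrank F K) : #{x : K | minpoly F x = P} = P.natDegree := by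
  have hsplits : (P.map (algebraMap F K)).Splits := by
    have hP_dvd : P ∣ X ^ Fintype.card K - X := by
      rw [← Nat.card_eq_fintype_card, Module.natCard_eq_pow_finrank (K := F)]
      exact hPi.natDegree_dvd_iff_dvd_X_pow_card_pow_sub_X.1 hdvd
    refine Splits.of_dvd (FiniteField.isSplittingField_sub K F).splits ?_
      (map_dvd (algebraMap F K) hP_dvd)
    exact map_ne_zero (FiniteField.X_pow_card_sub_X_ne_zero F Fintype.one_lt_card)
  rw [← card_rootSet_eq_natDegree (PerfectField.separable_of_irreducible hPi) hsplits,
    ← Set.toFinset_card]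
  congr 1
  ext x
  rw [Set.mem_toFinset, mem_rootSet_of_ne hP.ne_zero, mem_filter_univ]
  exact ⟨fun h => h ▸ minpoly.aeval F x,
    fun h => (minpoly.eq_of_irreducible_of_monic hPi h hP).symm⟩

theorem sum_minpoly_eq_sum_primePowersOfDegree {R : Type*} [Semiring R] (f : F[X] → ℕ → R) :
    ∑ x : K, f (minpoly F x) (Module.finrank F K / (minpoly F x).natDegree) =
      ∑ y ∈ primePowersOfDegree F (Module.finrank F K), y.1.natDegree * f y.1 y.2 := by
  classical
  set k := Module.finrank F K
  have hdvd (x : K) : (minpoly F x).natDegree ∣ k :=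
    minpoly.degree_dvd (Algebra.IsIntegral.isIntegral x)
  have hmaps : ∀ x ∈ (univ : Finset K),
      (minpoly F x, k / (minpoly F x).natDegree) ∈ primePowersOfDegree F k := fun x _ => by
    have hx : IsIntegral F x := Algebra.IsIntegral.isIntegral x
    exact mem_primePowersOfDegree.2 ⟨minpoly.monic hx, minpoly.irreducible hx,
      Nat.div_pos (Nat.le_of_dvd Module.finrank_pos (hdvd x)) (minpoly.natDegree_pos hx),
      Nat.mul_div_cancel' (hdvd x)⟩
  rw [← Finset.sum_fiberwise_of_maps_to hmaps]
  refine Finset.sum_congr rfl fun y hy => ?_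
  obtain ⟨hmonic, hirr, -, hdeg⟩ := mem_primePowersOfDegree.1 hy
  have hfiber (x : K) : (minpoly F x, k / (minpoly F x).natDegree) = y ↔ minpoly F x = y.1 := by
    simp only [Prod.ext_iff, and_iff_left_iff_imp]
    intro hx
    rw [hx, ← hdeg, Nat.mul_div_cancel_left _ hirr.natDegree_pos]
  rw [Finset.sum_congr rfl (g := fun _ => f y.1 y.2) fun x hx => by
    rw [← (mem_filter.1 hx).2], Finset.sum_const, nsmul_eq_mul]
  simp only [hfiber, card_minpoly_eq hmonic hirr (hdeg ▸ Nat.dvd_mul_right _ _)]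

theorem sum_mulChar_norm_eq_sum_primePowersOfDegree (χ : MulChar F ℂ) (s : Finset F) (e : F → ℕ) :
    ∑ x : K, χ (Algebra.norm F (∏ c ∈ s, (x + algebraMap F K c) ^ e c)) =
      ∑ y ∈ primePowersOfDegree F (Module.finrank F K),
        y.1.natDegree * evalProdChar χ s e y.1 ^ y.2 := by
  rw [← sum_minpoly_eq_sum_primePowersOfDegree (K := K) fun P j => evalProdChar χ s e P ^ j,
    ← Equiv.sum_comp (Equiv.neg K)]
  refine Finset.sum_congr rfl fun x _ => ?_
  rw [evalProdChar_apply, ← map_pow, map_prod, ← Finset.prod_pow]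
  congr 1
  refine Finset.prod_congr rfl fun c _ => ?_
  rw [map_pow, Equiv.neg_apply, neg_add_eq_sub, norm_algebraMap_sub_eq_eval_minpoly_pow,
    pow_right_comm]

end Extension

end LFunction

section WeilBound

variable {F : Type*} [Field F] {χ : MulChar F ℂ} {s : Finset F} {e : F → ℕ} {c₀ : F}

theorem exists_sum_primePowersOfDegree_eq_neg_sum_pow [Finite F] (hc₀ : c₀ ∈ s)
    (hχ : χ ^ e c₀ ≠ 1) :
    ∃ α : Fin (#s - 1) → ℂ, ∀ n, 0 < n →
      ∑ y ∈ primePowersOfDegree F n, y.1.natDegree * evalProdChar χ s e y.1 ^ y.2 =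
        -∑ i, α i ^ n := by
  have hpos : 0 < #s := Finset.card_pos.2 ⟨c₀, hc₀⟩
  exact exists_eq_neg_sum_pow_of_newton_recursion
    (a := fun n => ∑ g ∈ monicsOfDegree F n, evalProdChar χ s e g)
    (s := fun n => ∑ y ∈ primePowersOfDegree F n, y.1.natDegree * evalProdChar χ s e y.1 ^ y.2)
    (sum_monicsOfDegree_zero _) (fun n hn => sum_evalProdChar_eq_zero hc₀ hχ (by lia))
    (natCast_mul_sum_monicsOfDegree _)

variable [Fintype F]

theorem norm_le_sqrt_card_of_sum_primePowersOfDegree_eq (h0 : 0 ∉ s) (hc₀ : c₀ ∈ s)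
    (hχ : χ ^ e c₀ ≠ 1) {ι : Type*} [Fintype ι] {α : ι → ℂ}
    (hα : ∀ n, 0 < n →
      ∑ y ∈ primePowersOfDegree F n, y.1.natDegree * evalProdChar χ s e y.1 ^ y.2 =
        -∑ i, α i ^ n) (i : ι) : ‖α i‖ ≤ √(Fintype.card F) := by
  obtain ⟨A, hA⟩ := exists_norm_sum_mulChar_norm_prod_le h0 hc₀ hχ
  have hq : (0 : ℝ) < Fintype.card F := by exact_mod_cast Fintype.card_pos
  obtain ⟨p, hp⟩ := CharP.exists F
  have : Fact p.Prime := ⟨CharP.char_is_prime F p⟩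
  refine Real.le_sqrt_of_sq_le (norm_pow (α i) 2 ▸
    norm_le_of_norm_sum_pow_le (β := fun i => α i ^ 2) (A := A) hq (fun n hn => ?_) i)
  have : NeZero (2 * n) := ⟨by lia⟩
  let K := FiniteField.Extension F p (2 * n)
  have : Finite K := Module.finite_of_finite F
  let _ : Fintype K := Fintype.ofFinite K
  have hcard : Fintype.card K = Fintype.card F ^ (2 * n) := by
    rw [← Nat.card_eq_fintype_card, ← Nat.card_eq_fintype_card, FiniteField.natCard_extension]
  have hsum := hA n K hcard
  rw [sum_mulChar_norm_eq_sum_primePowersOfDegree, FiniteField.finrank_extension,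
    hα _ (by lia), norm_neg] at hsum
  simpa only [pow_mul] using hsum

theorem norm_sum_mulChar_prod_le_of_zero_notMem (h0 : 0 ∉ s) (hc₀ : c₀ ∈ s) (hχ : χ ^ e c₀ ≠ 1) :
    ‖∑ x : F, χ (∏ c ∈ s, (x + c) ^ e c)‖ ≤ (#s - 1) * √(Fintype.card F) := by
  obtain ⟨α, hα⟩ := exists_sum_primePowersOfDegree_eq_neg_sum_pow hc₀ hχ
  have hsum : ∑ x : F, χ (∏ c ∈ s, (x + c) ^ e c) = -∑ i, α i := by
    simpa [hα] using sum_mulChar_norm_eq_sum_primePowersOfDegree (K := F) χ s e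
  calc ‖∑ x : F, χ (∏ c ∈ s, (x + c) ^ e c)‖ ≤ ∑ i, ‖α i‖ := by
        rw [hsum, norm_neg]; exact norm_sum_le _ _
    _ ≤ Fintype.card (Fin (#s - 1)) • √(Fintype.card F) := Finset.sum_le_card_nsmul _ _ _
        fun i _ => norm_le_sqrt_card_of_sum_primePowersOfDegree_eq h0 hc₀ hχ hα i
    _ = (#s - 1) * √(Fintype.card F) := by
        rw [Fintype.card_fin, nsmul_eq_mul, Nat.cast_pred (Finset.card_pos.2 ⟨c₀, hc₀⟩)]

theorem two_lt_card_of_mulChar_ne_one {χ : MulChar F ℂ} (hχ : χ ≠ 1) : 2 < Fintype.card F := by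
  classical
  obtain ⟨v, hv⟩ := MulChar.ne_one_iff.1 hχ
  have hunits : 1 < Fintype.card Fˣ :=
    Fintype.one_lt_card_iff.2 ⟨v, 1, fun h => hv (by rw [h, Units.val_one, map_one])⟩
  rw [Fintype.card_units] at hunits
  lia

theorem norm_sum_mulChar_prod_le (hc₀ : c₀ ∈ s) (hχ : χ ^ e c₀ ≠ 1) :
    ‖∑ x : F, χ (∏ c ∈ s, (x + c) ^ e c)‖ ≤ (#s - 1) * √(Fintype.card F) := by
  classical
  by_cases huniv : s = univ
  · have hq : (3 : ℝ) ≤ Fintype.card F := by exact_mod_cast two_lt_card_of_mulChar_ne_one hχ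
    calc ‖∑ x : F, χ (∏ c ∈ s, (x + c) ^ e c)‖ ≤ ∑ _ : F, (1 : ℝ) :=
          norm_sum_le_of_le _ fun _ _ => norm_mulChar_le_one χ _
      _ = Fintype.card F := by simp
      _ ≤ (#s - 1) * √(Fintype.card F) := by
          rw [huniv, Finset.card_univ]
          have hsqrt : (3 / 2 : ℝ) ≤ √(Fintype.card F) :=
            Real.le_sqrt_of_sq_le (le_trans (by norm_num) hq)
          nlinarith
  · obtain ⟨y, hy⟩ : ∃ y, y ∉ s := by simpa [Finset.eq_univ_iff_forall] using huniv
    have htranslate := norm_sum_mulChar_prod_le_of_zero_notMem (χ := χ) (s := s.image (· - y))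
      (e := fun c => e (c + y)) (by simpa [sub_eq_zero] using hy)
      (Finset.mem_image_of_mem _ hc₀) (by simpa using hχ)
    rw [Finset.card_image_of_injective _ sub_left_injective, ← Equiv.sum_comp (Equiv.addRight y)]
      at htranslate
    simpa [Finset.prod_image, add_assoc] using htranslate

end WeilBound

section DependentTuples

variable {ι : Type*} {j : ι → ι}

/-- `B` meets the forward orbit of every point under `j`. -/
def MeetsOrbits (j : ι → ι) (B : Finset ι) : Prop :=
  ∀ i, ∃ n, j^[n] i ∈ B

theorem MeetsOrbits.of_apply_mem {B C : Finset ι} (hB : MeetsOrbits j B)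
    (hC : ∀ b ∈ B, b ∈ C ∨ j b ∈ C) : MeetsOrbits j C := fun i => by
  obtain ⟨n, hn⟩ := hB i
  rcases hC _ hn with h | h
  · exact ⟨n, h⟩
  · exact ⟨n + 1, by rwa [Function.iterate_succ_apply']⟩

/-- A tuple is dependent with respect to `A` when each of its entries is another entry, or the
image under `A` of another entry. These are the tuples to which the Weil bound does not apply. -/
def IsDependentTuple {β : Type*} (A : β → β) (y : ι → β) : Prop :=
  ∀ i, ∃ k, k ≠ i ∧ (y i = y k ∨ y i = A (y k))

variable [Fintype ι]

-- In a smallest set meeting all orbits, no point can be replaced by its image, so `j` embeds the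
-- set into its complement.
theorem exists_meetsOrbits_two_mul_card_le (hj : ∀ i, j i ≠ i) :
    ∃ B : Finset ι, MeetsOrbits j B ∧ 2 * #B ≤ Fintype.card ι := by
  classical
  obtain ⟨B, hB, hmin⟩ := Finset.exists_min_image (univ.filter (MeetsOrbits j)) Finset.card
    ⟨univ, by simp [MeetsOrbits]⟩
  replace hB := (mem_filter.1 hB).2
  replace hmin : ∀ C, MeetsOrbits j C → #B ≤ #C := fun C hC => hmin C (by simpa using hC)
  have hmaps : ∀ b ∈ B, j b ∈ Bᶜ := by
    refine fun b hb => mem_compl.2 fun hjb => ?_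
    refine (Finset.card_erase_lt_of_mem hb).not_ge (hmin _ (hB.of_apply_mem fun c hc => ?_))
    rcases eq_or_ne c b with rfl | hcb
    · exact .inr (mem_erase.2 ⟨hj c, hjb⟩)
    · exact .inl (mem_erase.2 ⟨hcb, hc⟩)
  have hinj : Set.InjOn j B := by
    intro b hb c hc hbc
    by_contra hne
    have hC := hmin (insert (j b) ((B.erase b).erase c)) (hB.of_apply_mem fun x hx => by grind)
    have hinsert := Finset.card_insert_le (j b) ((B.erase b).erase c)
    have hcardc := Finset.card_erase_add_one (mem_erase.2 ⟨Ne.symm hne, hc⟩ : c ∈ B.erase b)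
    have hcardb := Finset.card_erase_add_one hb
    lia
  refine ⟨B, hB, ?_⟩
  have hcard := Finset.card_le_card_of_injOn j hmaps hinj
  have hcompl := Finset.card_add_card_compl B
  lia

theorem card_filter_eq_comp_le {β : Type*} (T : Finset β) (hT : T.Nonempty) (hj : ∀ i, j i ≠ i)
    (g : ι → β → β) [DecidablePred fun y : ι → β => ∀ i, y i = g i (y (j i))] [DecidableEq ι] :
    #((Fintype.piFinset fun _ : ι => T).filter fun y => ∀ i, y i = g i (y (j i))) ≤
      #T ^ (Fintype.card ι / 2) := by
  obtain ⟨B, hB, hcard⟩ := exists_meetsOrbits_two_mul_card_le hj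
  calc _ ≤ #(Fintype.piFinset fun _ : B => T) := by
        refine Finset.card_le_card_of_injOn (fun y (b : B) => y b) (fun y hy => ?_)
          fun y hy z hz hyz => funext fun i => ?_
        · have hyT := Fintype.mem_piFinset.1 (mem_filter.1 hy).1
          exact Fintype.mem_piFinset.2 fun b => hyT b
        · obtain ⟨n, hn⟩ := hB i
          induction n generalizing i with
          | zero => exact congrFun hyz ⟨i, hn⟩
          | succ n ih => rw [(mem_filter.1 hy).2 i, (mem_filter.1 hz).2 i, ih _ hn]
    _ = #T ^ #B := by simp
    _ ≤ #T ^ (Fintype.card ι / 2) := Nat.pow_le_pow_right hT.card_pos (by lia)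

theorem card_filter_isDependentTuple_le {β : Type*} (T : Finset β) (hT : T.Nonempty) (A : β → β)
    [DecidablePred (IsDependentTuple (ι := ι) A)] [DecidableEq ι] :
    #((Fintype.piFinset fun _ : ι => T).filter (IsDependentTuple A)) ≤
      (2 * Fintype.card ι) ^ Fintype.card ι * #T ^ (Fintype.card ι / 2) := by
  classical
  let patterns := univ.filter fun f : ι → ι × Bool => ∀ i, (f i).1 ≠ i
  let solutions (f : ι → ι × Bool) := (Fintype.piFinset fun _ : ι => T).filter fun y =>
    ∀ i, y i = (if (f i).2 then id else A) (y (f i).1)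
  have hcover : (Fintype.piFinset fun _ : ι => T).filter (IsDependentTuple A) ⊆
      patterns.biUnion solutions := fun y hy => by
    obtain ⟨hyT, hydep⟩ := mem_filter.1 hy
    choose k hk hyk using hydep
    refine mem_biUnion.2 ⟨fun i => (k i, decide (y i = y (k i))), by simpa [patterns] using hk,
      mem_filter.2 ⟨hyT, fun i => ?_⟩⟩
    by_cases h : y i = y (k i)
    · simp [h]
    · simpa [h] using (hyk i).resolve_left h
  calc _ ≤ #(patterns.biUnion solutions) := Finset.card_le_card hcover
    _ ≤ #patterns * #T ^ (Fintype.card ι / 2) := Finset.card_biUnion_le_card_mul _ _ _ fun f hf =>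
        card_filter_eq_comp_le T hT (mem_filter.1 hf).2 _
    _ ≤ (2 * Fintype.card ι) ^ Fintype.card ι * #T ^ (Fintype.card ι / 2) := by
        gcongr
        refine (Finset.card_filter_le _ _).trans_eq ?_
        simp [mul_comm]

end DependentTuples

section TupleSums

theorem prod_pow_sum_ite_eq {M β ι : Type*} [CommMonoid M] [DecidableEq β] [Fintype ι]
    {s : Finset β} {y : ι → β} (hy : ∀ i, y i ∈ s) (f : β → M) (u : ι → ℕ) :
    ∏ c ∈ s, f c ^ ∑ i, (if c = y i then u i else 0) = ∏ i, f (y i) ^ u i := by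
  simp only [← Finset.prod_pow_eq_pow_sum]
  rw [Finset.prod_comm]
  refine Finset.prod_congr rfl fun i _ => ?_
  simp [pow_ite, Finset.prod_ite_eq', hy i]

variable {F : Type*} [Field F] [Fintype F] {χ : MulChar F ℂ}

theorem norm_sum_prod_mulChar_le {ι : Type*} [Fintype ι] {y z : ι → F} {u v : ι → ℕ} {i₀ : ι}
    (hχ : χ ^ u i₀ ≠ 1) (hy : ∀ i, i ≠ i₀ → y i₀ ≠ y i) (hz : ∀ i, y i₀ ≠ z i) :
    ‖∑ x : F, ∏ i, (χ (x + y i) ^ u i * χ (x + z i) ^ v i)‖ ≤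
      (2 * Fintype.card ι - 1) * √(Fintype.card F) := by
  classical
  let s := univ.image y ∪ univ.image z
  have hys (i : ι) : y i ∈ s := mem_union_left _ (mem_image_of_mem _ (mem_univ i))
  have hzs (i : ι) : z i ∈ s := mem_union_right _ (mem_image_of_mem _ (mem_univ i))
  let e (c : F) : ℕ := ∑ i, (if c = y i then u i else 0) + ∑ i, (if c = z i then v i else 0)
  have hprod (x : F) :
      ∏ i, (χ (x + y i) ^ u i * χ (x + z i) ^ v i) = χ (∏ c ∈ s, (x + c) ^ e c) := by
    simp only [e, pow_add, Finset.prod_mul_distrib, prod_pow_sum_ite_eq hys (x + ·),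
      prod_pow_sum_ite_eq hzs (x + ·), map_mul, map_prod, map_pow]
  have he : e (y i₀) = u i₀ := by
    have hsum : ∑ i, (if y i₀ = y i then u i else 0) = u i₀ := by
      rw [Finset.sum_eq_single i₀ (fun i _ hi => if_neg (hy i hi)) (by simp), if_pos rfl]
    simp [e, hsum, hz]
  have hcard : #s ≤ 2 * Fintype.card ι := by
    have hunion := Finset.card_union_le (univ.image y) (univ.image z)
    have hcardy := Finset.card_image_le (s := univ) (f := y)
    have hcardz := Finset.card_image_le (s := univ) (f := z)
    rw [Finset.card_univ] at hcardy hcardz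
    lia
  simp only [hprod]
  refine (norm_sum_mulChar_prod_le (hys i₀) (he ▸ hχ)).trans ?_
  gcongr
  exact_mod_cast hcard

theorem conj_mulChar_apply (χ : MulChar F ℂ) (hq : 2 < Fintype.card F) (x : F) :
    starRingEnd ℂ (χ x) = χ x ^ (Fintype.card F - 2) := by
  obtain rfl | hx := eq_or_ne x 0
  · rw [MulChar.map_zero, map_zero, zero_pow (by lia)]
  · have hpow : χ x ^ (Fintype.card F - 1) = 1 := by
      rw [← map_pow, FiniteField.pow_card_sub_one_eq_one x hx, map_one]
    rw [← Complex.inv_eq_conj (Complex.norm_eq_one_of_pow_eq_one hpow (by lia))]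
    refine inv_eq_of_mul_eq_one_right ?_
    rw [← pow_succ', ← hpow]
    congr 1
    lia

theorem mulChar_pow_card_sub_two_ne_one (hχ : χ ≠ 1) : χ ^ (Fintype.card F - 2) ≠ 1 := by
  intro h
  obtain ⟨v, hv⟩ := MulChar.ne_one_iff.1 hχ
  have hq := two_lt_card_of_mulChar_ne_one hχ
  refine hv ((map_eq_one_iff (starRingEnd ℂ) (starRingEnd ℂ).injective).1 ?_)
  rw [conj_mulChar_apply χ hq, ← MulChar.pow_apply_coe, h, MulChar.one_apply_coe]

end TupleSums

section MomentMethod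

variable {α β : Type*}

theorem exists_norm_eq_one_sum_norm_sum_le (K : α → β → ℂ) (S : Finset α) (T : Finset β) :
    ∃ θ : β → ℂ, (∀ y, ‖θ y‖ = 1) ∧
      ∑ y ∈ T, ‖∑ s ∈ S, K s y‖ ≤ ∑ s ∈ S, ‖∑ y ∈ T, θ y * K s y‖ := by
  choose θ hθ hθK using fun y => Complex.exists_norm_eq_mul_self (∑ s ∈ S, K s y)
  refine ⟨θ, hθ, ?_⟩
  have hsum : ((∑ y ∈ T, ‖∑ s ∈ S, K s y‖ : ℝ) : ℂ) = ∑ s ∈ S, ∑ y ∈ T, θ y * K s y := by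
    rw [Complex.ofReal_sum, Finset.sum_comm]
    simp only [hθK, Finset.mul_sum]
  calc ∑ y ∈ T, ‖∑ s ∈ S, K s y‖ = ‖((∑ y ∈ T, ‖∑ s ∈ S, K s y‖ : ℝ) : ℂ)‖ := by
        rw [Complex.norm_real, Real.norm_of_nonneg (by positivity)]
    _ ≤ ∑ s ∈ S, ‖∑ y ∈ T, θ y * K s y‖ := hsum ▸ norm_sum_le _ _

theorem exists_norm_eq_one_sum_norm_sum_pow_le [Fintype α] (K : α → β → ℂ) (S : Finset α)
    (T : Finset β) {n : ℕ} (hn : 1 ≤ n) :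
    ∃ θ : β → ℂ, (∀ y, ‖θ y‖ = 1) ∧ (∑ y ∈ T, ‖∑ s ∈ S, K s y‖) ^ n ≤
      #S ^ (n - 1) * ∑ s, ‖∑ y ∈ T, θ y * K s y‖ ^ n := by
  obtain ⟨θ, hθ, hle⟩ := exists_norm_eq_one_sum_norm_sum_le K S T
  have hholder := Real.rpow_sum_le_const_mul_sum_rpow S (fun s => ‖∑ y ∈ T, θ y * K s y‖)
    (p := n) (by exact_mod_cast hn)
  refine ⟨θ, hθ, ?_⟩
  calc (∑ y ∈ T, ‖∑ s ∈ S, K s y‖) ^ n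
      ≤ (∑ s ∈ S, ‖∑ y ∈ T, θ y * K s y‖) ^ n := by gcongr
    _ ≤ #S ^ (n - 1) * ∑ s ∈ S, ‖∑ y ∈ T, θ y * K s y‖ ^ n := by
        simpa [← Nat.cast_pred hn, -Nat.cast_sub] using hholder
    _ ≤ #S ^ (n - 1) * ∑ s, ‖∑ y ∈ T, θ y * K s y‖ ^ n := by
        gcongr
        exact Finset.subset_univ S

/-- The sum over `s` of `K s y₁ ⋯ K s yᵣ` times the conjugate of `K s yᵣ₊₁ ⋯ K s y₂ᵣ`; these are
the terms in the expansion of the `2r`-th moment of a linear combination of the `K s y`. The two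
halves of the tuple `y` are indexed by the two summands of `Fin r ⊕ Fin r`. -/
noncomputable def tupleCorrelation [Fintype α] {r : ℕ} (K : α → β → ℂ) (y : Fin r ⊕ Fin r → β) :
    ℂ :=
  ∑ s, (∏ i, K s (y (.inl i))) * ∏ i, starRingEnd ℂ (K s (y (.inr i)))

theorem norm_tupleCorrelation_le [Fintype α] {r : ℕ} {K : α → β → ℂ} (hK : ∀ s y, ‖K s y‖ ≤ 1)
    (y : Fin r ⊕ Fin r → β) : ‖tupleCorrelation K y‖ ≤ Fintype.card α := by
  suffices ‖tupleCorrelation K y‖ ≤ ∑ _ : α, (1 : ℝ) by simpa using this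
  refine norm_sum_le_of_le _ fun s _ => ?_
  rw [norm_mul, norm_prod, norm_prod]
  refine mul_le_one₀ (prod_le_one (fun _ _ => norm_nonneg _) fun _ _ => hK _ _)
    (prod_nonneg fun _ _ => norm_nonneg _) (prod_le_one (fun _ _ => norm_nonneg _) fun _ _ => ?_)
  rw [RCLike.norm_conj]
  exact hK _ _

theorem ofReal_norm_sum_pow_two_mul (c : β → ℂ) (T : Finset β) (r : ℕ) :
    ((‖∑ y ∈ T, c y‖ ^ (2 * r) : ℝ) : ℂ) =
      ∑ y ∈ Fintype.piFinset fun _ : Fin r ⊕ Fin r => T,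
        (∏ i, c (y (.inl i))) * ∏ i, starRingEnd ℂ (c (y (.inr i))) := by
  let factor : Fin r ⊕ Fin r → β → ℂ := Sum.elim (fun _ => c) fun _ y => starRingEnd ℂ (c y)
  have hfactor : ((‖∑ y ∈ T, c y‖ ^ (2 * r) : ℝ) : ℂ) = ∏ i, ∑ y ∈ T, factor i y := by
    rw [Fintype.prod_sum_type]
    simp [factor, ← map_sum, ← mul_pow, Complex.mul_conj', pow_mul]
  rw [hfactor, Finset.prod_univ_sum]
  simp [factor, Fintype.prod_sum_type]

theorem sum_norm_pow_two_mul_le [Fintype α] (K : α → β → ℂ) (T : Finset β) {θ : β → ℂ}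
    (hθ : ∀ y, ‖θ y‖ = 1) (r : ℕ) :
    ∑ s, ‖∑ y ∈ T, θ y * K s y‖ ^ (2 * r) ≤
      ∑ y ∈ Fintype.piFinset fun _ : Fin r ⊕ Fin r => T, ‖tupleCorrelation K y‖ := by
  let phase (y : Fin r ⊕ Fin r → β) : ℂ :=
    (∏ i, θ (y (.inl i))) * ∏ i, starRingEnd ℂ (θ (y (.inr i)))
  have hphase (y : Fin r ⊕ Fin r → β) : ‖phase y‖ = 1 := by
    simp [phase, norm_prod, hθ]
  have hexpand : ((∑ s, ‖∑ y ∈ T, θ y * K s y‖ ^ (2 * r) : ℝ) : ℂ) =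
      ∑ y ∈ Fintype.piFinset fun _ : Fin r ⊕ Fin r => T, phase y * tupleCorrelation K y := by
    rw [Complex.ofReal_sum]
    simp only [ofReal_norm_sum_pow_two_mul, tupleCorrelation, Finset.mul_sum]
    rw [Finset.sum_comm]
    simp only [phase, map_mul, Finset.prod_mul_distrib, mul_mul_mul_comm]
  calc ∑ s, ‖∑ y ∈ T, θ y * K s y‖ ^ (2 * r)
      = ‖((∑ s, ‖∑ y ∈ T, θ y * K s y‖ ^ (2 * r) : ℝ) : ℂ)‖ := by
        rw [Complex.norm_real, Real.norm_of_nonneg (by positivity)]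
    _ ≤ ∑ y ∈ Fintype.piFinset fun _ : Fin r ⊕ Fin r => T, ‖tupleCorrelation K y‖ := by
        rw [hexpand]
        exact norm_sum_le_of_le _ fun y _ => by rw [norm_mul, hphase, one_mul]

end MomentMethod

section Correlation

variable {F : Type*} [Field F] [Fintype F] {χ : MulChar F ℂ} {a : ℕ} {r : ℕ}

theorem norm_tupleCorrelation_mulChar_le (hχ : χ ^ a ≠ 1) (b : ℕ) {A : F → F}
    {y : Fin r ⊕ Fin r → F} (hA : ∀ i, A (y i) ≠ y i) (hy : ¬ IsDependentTuple A y) :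
    ‖tupleCorrelation (fun s y => χ (s + y) ^ a * χ (s + A y) ^ b) y‖ ≤
      (4 * r - 1) * √(Fintype.card F) := by
  have hq : 2 < Fintype.card F :=
    two_lt_card_of_mulChar_ne_one (χ := χ) fun h => hχ (by rw [h, one_pow])
  let ε : Fin r ⊕ Fin r → ℕ := Sum.elim (fun _ => 1) fun _ => Fintype.card F - 2
  have hε (i) : χ ^ (ε i * a) ≠ 1 := by
    rcases i with i | i
    · simpa [ε] using hχ
    · simpa only [ε, Sum.elim_inr, mul_comm _ a, pow_mul] using mulChar_pow_card_sub_two_ne_one hχ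
  have hcorr : tupleCorrelation (fun s y => χ (s + y) ^ a * χ (s + A y) ^ b) y =
      ∑ s, ∏ i, (χ (s + y i) ^ (ε i * a) * χ (s + A (y i)) ^ (ε i * b)) := by
    simp [tupleCorrelation, Fintype.prod_sum_type, ε, conj_mulChar_apply χ hq, pow_mul]
  simp only [IsDependentTuple, not_forall, not_exists, not_and, not_or] at hy
  obtain ⟨i₀, hi₀⟩ := hy
  rw [hcorr]
  refine (norm_sum_prod_mulChar_le (u := fun i => ε i * a) (hε i₀) (fun i hi => (hi₀ i hi).1)
    fun i => ?_).trans_eq ?_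
  · obtain rfl | hi := eq_or_ne i i₀
    exacts [(hA i).symm, (hi₀ i hi).2]
  · simp
    ring

theorem card_filter_isDependentTuple_sum_fin_le {β : Type*} {T : Finset β} (hT : T.Nonempty)
    (A : β → β) [DecidablePred (IsDependentTuple (ι := Fin r ⊕ Fin r) A)] (hr : 1 ≤ r) :
    #((Fintype.piFinset fun _ : Fin r ⊕ Fin r => T).filter (IsDependentTuple A)) ≤
      (2 * r) ^ (4 * r) * #T ^ r := by
  refine (card_filter_isDependentTuple_le T hT A).trans ?_
  simp only [Fintype.card_sum, Fintype.card_fin, ← two_mul, Nat.mul_div_cancel_left r two_pos]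
  rw [show 4 * r = 2 * (2 * r) by ring, pow_mul (2 * r) 2]
  gcongr
  nlinarith

theorem sum_norm_tupleCorrelation_mulChar_sq_le (hχ : χ ^ a ≠ 1) (b : ℕ) {T : Finset F}
    (hT : T.Nonempty) {A : F → F} (hA : ∀ y ∈ T, A y ≠ y) (hr : 1 ≤ r) :
    ∑ y ∈ Fintype.piFinset fun _ : Fin r ⊕ Fin r => T,
        ‖tupleCorrelation (fun s y => χ (s + y) ^ a * χ (s + A y) ^ b) y‖ ^ 2 ≤
      (#T : ℝ) ^ (2 * r) * ((4 * r - 1) ^ 2 * Fintype.card F) +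
        (2 * r) ^ (4 * r) * #T ^ r * (Fintype.card F : ℝ) ^ 2 := by
  classical
  have hnorm (s y : F) : ‖χ (s + y) ^ a * χ (s + A y) ^ b‖ ≤ 1 := by
    rw [norm_mul, norm_pow, norm_pow]
    exact mul_le_one₀ (pow_le_one₀ (norm_nonneg _) (norm_mulChar_le_one χ _)) (by positivity)
      (pow_le_one₀ (norm_nonneg _) (norm_mulChar_le_one χ _))
  rw [← Finset.sum_filter_add_sum_filter_not _ (IsDependentTuple A), add_comm]
  refine add_le_add ?_ ?_
  · refine (Finset.sum_le_card_nsmul _ _ ((4 * r - 1) ^ 2 * Fintype.card F : ℝ)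
      fun y hy => ?_).trans ?_
    · obtain ⟨hyT, hy⟩ := mem_filter.1 hy
      rw [← Real.sq_sqrt (Fintype.card F).cast_nonneg, ← mul_pow]
      gcongr
      exact norm_tupleCorrelation_mulChar_le hχ b
        (fun i => hA _ (Fintype.mem_piFinset.1 hyT i)) hy
    · rw [nsmul_eq_mul]
      gcongr
      exact_mod_cast (Finset.card_filter_le _ _).trans_eq (by simp [two_mul])
  · refine (Finset.sum_le_card_nsmul _ _ ((Fintype.card F : ℝ) ^ 2) fun y _ => ?_).trans ?_
    · gcongr
      exact norm_tupleCorrelation_le hnorm y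
    · rw [nsmul_eq_mul]
      gcongr
      exact_mod_cast card_filter_isDependentTuple_sum_fin_le hT A hr

theorem sum_norm_sum_mulChar_pow_le (hχ : χ ^ a ≠ 1) (b : ℕ) (S : Finset F) {T : Finset F}
    (hT : T.Nonempty) {A : F → F} (hA : ∀ y ∈ T, A y ≠ y) (hr : 1 ≤ r) :
    (∑ y ∈ T, ‖∑ s ∈ S, χ (s + y) ^ a * χ (s + A y) ^ b‖) ^ (4 * r) ≤
      ((#S : ℝ) ^ (2 * r - 1)) ^ 2 * (#T ^ (2 * r) *
        (#T ^ (2 * r) * ((4 * r - 1) ^ 2 * Fintype.card F) +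
          (2 * r) ^ (4 * r) * #T ^ r * (Fintype.card F : ℝ) ^ 2)) := by
  set K : F → F → ℂ := fun s y => χ (s + y) ^ a * χ (s + A y) ^ b
  obtain ⟨θ, hθ, hholder⟩ := exists_norm_eq_one_sum_norm_sum_pow_le K S T (n := 2 * r) (by lia)
  have hcauchy := sq_sum_le_card_mul_sum_sq (s := Fintype.piFinset fun _ : Fin r ⊕ Fin r => T)
    (f := fun y => ‖tupleCorrelation K y‖)
  calc (∑ y ∈ T, ‖∑ s ∈ S, K s y‖) ^ (4 * r)
      = ((∑ y ∈ T, ‖∑ s ∈ S, K s y‖) ^ (2 * r)) ^ 2 := by rw [← pow_mul]; congr 1; ring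
    _ ≤ (#S ^ (2 * r - 1) *
          ∑ y ∈ Fintype.piFinset fun _ : Fin r ⊕ Fin r => T, ‖tupleCorrelation K y‖) ^ 2 := by
        gcongr
        exact hholder.trans (by gcongr; exact sum_norm_pow_two_mul_le K T hθ r)
    _ ≤ (#S ^ (2 * r - 1)) ^ 2 * (#T ^ (2 * r) *
          ∑ y ∈ Fintype.piFinset fun _ : Fin r ⊕ Fin r => T, ‖tupleCorrelation K y‖ ^ 2) := by
        rw [mul_pow]
        gcongr
        simpa [two_mul] using hcauchy
    _ ≤ _ := by
        gcongr
        exact sum_norm_tupleCorrelation_mulChar_sq_le hχ b hT hA hr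

end Correlation

theorem le_rpow_mul_rpow_of_pow_le {L c q σ t : ℝ} {r : ℕ} (hr : 1 ≤ r) (hc : 0 ≤ c)
    (hq : 0 ≤ q) (hσ : 0 ≤ σ) (ht : 0 ≤ t)
    (hL : L ^ (4 * r) ≤ c * q * (σ ^ (2 * r - 1)) ^ 2 * t ^ (4 * r)) :
    L ≤ c ^ (1 / (4 * (r : ℝ))) * q ^ (1 / (4 * (r : ℝ))) * σ ^ (1 - 1 / (2 * (r : ℝ))) * t := by
  have hr0 : (r : ℝ) ≠ 0 := by exact_mod_cast Nat.one_le_iff_ne_zero.1 hr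
  have hroot {x : ℝ} (hx : 0 ≤ x) : (x ^ (1 / (4 * (r : ℝ)))) ^ (4 * r) = x := by
    rw [one_div]
    exact_mod_cast Real.rpow_inv_natCast_pow hx (n := 4 * r) (by lia)
  have hσpow : (σ ^ (1 - 1 / (2 * (r : ℝ)))) ^ (4 * r) = (σ ^ (2 * r - 1)) ^ 2 := by
    rw [← Real.rpow_natCast, ← Real.rpow_mul hσ, ← pow_mul, ← Real.rpow_natCast]
    congr 1
    push_cast [Nat.cast_sub (by lia : 1 ≤ 2 * r)]
    field_simp
    ring
  refine le_of_pow_le_pow_left₀ (n := 4 * r) (by lia) (by positivity) (hL.trans_eq ?_)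
  rw [mul_pow, mul_pow, mul_pow, hroot hc, hroot hq, hσpow]

theorem stmt_10_general {F : Type*} [Field F] [Fintype F] (χ : MulChar F ℂ) (a b : ℕ)
    (hχ : χ ^ a ≠ 1) (S T : Finset F) (hT : T.Nonempty) (A : F → F) (hA : ∀ y ∈ T, A y ≠ y)
    (r : ℕ) (hr : 1 ≤ r) :
    ∑ y ∈ T, ‖∑ s ∈ S, (χ (s + y)) ^ a * (χ (s + A y)) ^ b‖ ≤
      ((4 * (r : ℝ) - 1) ^ 2 +
          (2 * (r : ℝ)) ^ (4 * r) * (Fintype.card F : ℝ) * (T.card : ℝ) ^ (-(r : ℝ)))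
        ^ (1 / (4 * (r : ℝ))) *
      (Fintype.card F : ℝ) ^ (1 / (4 * (r : ℝ))) *
      (S.card : ℝ) ^ (1 - 1 / (2 * (r : ℝ))) * (T.card : ℝ) := by
  have : (#T : ℝ) ≠ 0 := by exact_mod_cast hT.card_pos.ne'
  refine le_rpow_mul_rpow_of_pow_le hr (by positivity) (Nat.cast_nonneg _) (Nat.cast_nonneg _)
    (Nat.cast_nonneg _) ((sum_norm_sum_mulChar_pow_le hχ b S hT hA hr).trans_eq ?_)
  rw [Real.rpow_neg (Nat.cast_nonneg _), Real.rpow_natCast]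
  field_simp
  ring

/-- parameterized double character sum: Let F = F_q, χ of order q-1,
χ_a = χ^a (0 < a < q-1), χ_b = χ^b (0 ≤ b < q-1), S, T nonempty subsets of F,
A : F → F with no fixed points. Then for each natural number r ≥ 1,
∑_{y∈T} |∑_{s∈S} χ_a(s+y)·χ_b(s+A(y))| ≤ λ_r · q^{1/(4r)} · |S|^{1-1/(2r)} · |T|,
where λ_r = ((4r-1)² + (2r)^{4r}·q·|T|^{-r})^{1/(4r)}. -/
theorem stmt_10 {F : Type*} [Field F] [Fintype F]
    (χ : MulChar F ℂ) (hord : orderOf χ = Fintype.card F - 1)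
    (a b : ℕ) (ha : 0 < a) (ha' : a < Fintype.card F - 1) (hb : b < Fintype.card F - 1)
    (S T : Finset F) (hS : S.Nonempty) (hT : T.Nonempty)
    (A : F → F) (hA : ∀ y, A y ≠ y) (r : ℕ) (hr : 1 ≤ r) :
    ∑ y ∈ T, ‖∑ s ∈ S, (χ (s + y)) ^ a * (χ (s + A y)) ^ b‖ ≤
      ((4 * (r : ℝ) - 1) ^ 2 +
          (2 * (r : ℝ)) ^ (4 * r) * (Fintype.card F : ℝ) * (T.card : ℝ) ^ (-(r : ℝ)))
        ^ (1 / (4 * (r : ℝ))) *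
      (Fintype.card F : ℝ) ^ (1 / (4 * (r : ℝ))) *
      (S.card : ℝ) ^ (1 - 1 / (2 * (r : ℝ))) * (T.card : ℝ) :=
  stmt_10_general χ a b (pow_ne_one_of_lt_orderOf ha.ne' (hord ▸ ha')) S T hT A
    (fun y _ => hA y) r hr
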